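/- arXiv:math/0701228 — 3 statements merged into one kernel-verified Lean document; each statement's English description precedes it below -/
import Mathlib

section
/- For every t > 0 and every K > 1, writing r = √(t/(1+t)) and r' = 1/√(1+t), one has t·exp(2(K−1)·μ(r')) < η_K(t) < t·exp(4(K−1)·𝒦(r)·𝒦'(r)/π). -/
open Set Filter

/-- Complete elliptic integral of the first kind. -/
noncomputable def ellK (r : ℝ) : ℝ :=
  ∫ θ in (0:ℝ)..(Real.pi / 2), (1 - r ^ 2 * Real.sin θ ^ 2) ^ (-(1/2) : ℝ)

/-- The Grötzsch modulus μ(r) = (π/2)·𝒦'(r)/𝒦(r). -/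
noncomputable def mu (r : ℝ) : ℝ :=
  Real.pi / 2 * ellK (Real.sqrt (1 - r ^ 2)) / ellK r


noncomputable def sF (m : ℝ) : ℝ :=
  ∫ θ in (0:ℝ)..(Real.pi / 2), (Real.sqrt (1 - m * Real.sin θ ^ 2))⁻¹

noncomputable def sG (m : ℝ) : ℝ :=
  ∫ θ in (0:ℝ)..(Real.pi / 2), Real.sqrt (1 - m * Real.sin θ ^ 2)

theorem ellK_eq {r : ℝ} (hr : r ^ 2 ≤ 1) : ellK r = sF (r ^ 2) := by
  unfold ellK sF
  congr 1
  funext θ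
  have h : 0 ≤ 1 - r ^ 2 * Real.sin θ ^ 2 := by
    nlinarith [Real.sin_sq_le_one θ, sq_nonneg r, sq_nonneg (Real.sin θ)]
  rw [Real.rpow_neg h, Real.sqrt_eq_rpow]

theorem delta_lb {m b : ℝ} (h0 : 0 ≤ m) (h : m ≤ b) (θ : ℝ) :
    1 - b ≤ 1 - m * Real.sin θ ^ 2 := by
  nlinarith [Real.sin_sq_le_one θ, sq_nonneg (Real.sin θ)]

theorem delta_pos {m : ℝ} (h0 : 0 ≤ m) (h : m < 1) (θ : ℝ) :
    0 < 1 - m * Real.sin θ ^ 2 := by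
  have := delta_lb h0 le_rfl θ
  linarith

theorem cont_inv {m : ℝ} (h0 : 0 ≤ m) (h : m < 1) :
    Continuous (fun θ : ℝ => (Real.sqrt (1 - m * Real.sin θ ^ 2))⁻¹) := by
  apply Continuous.inv₀
  · fun_prop
  · intro θ
    exact (Real.sqrt_pos.2 (delta_pos h0 h θ)).ne'

theorem cont_inv3 {m : ℝ} (h0 : 0 ≤ m) (h : m < 1) :
    Continuous (fun θ : ℝ => ((Real.sqrt (1 - m * Real.sin θ ^ 2)) ^ 3)⁻¹) := by
  apply Continuous.inv₀
  · fun_prop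
  · intro θ
    exact (pow_pos (Real.sqrt_pos.2 (delta_pos h0 h θ)) 3).ne'

theorem sG_cont : Continuous sG := by
  unfold sG
  apply intervalIntegral.continuous_parametric_intervalIntegral_of_continuous'
  fun_prop

theorem sF_hasDerivAt0 {m : ℝ} (h0 : 0 < m) (h : m < 1) :
    HasDerivAt sF (∫ θ in (0:ℝ)..(Real.pi / 2),
      Real.sin θ ^ 2 / 2 * ((Real.sqrt (1 - m * Real.sin θ ^ 2)) ^ 3)⁻¹) m := by
  set b := (1 + m) / 2 with hb
  have hmb : m < b := by linarith
  have hb1 : b < 1 := by linarith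
  have hd : 0 < Real.sqrt (1 - b) := Real.sqrt_pos.2 (by linarith)
  refine (intervalIntegral.hasDerivAt_integral_of_dominated_loc_of_deriv_le
    (μ := MeasureTheory.volume) (s := Set.Ioo 0 b)
    (bound := fun _ => ((Real.sqrt (1 - b)) ^ 3)⁻¹)
    (F' := fun m θ => Real.sin θ ^ 2 / 2 * ((Real.sqrt (1 - m * Real.sin θ ^ 2)) ^ 3)⁻¹)
    (Ioo_mem_nhds h0 hmb) ?_ ?_ ?_ ?_ ?_ ?_).2
  · filter_upwards [Ioo_mem_nhds h0 h] with x hx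
    exact (cont_inv hx.1.le hx.2).aestronglyMeasurable
  · exact (cont_inv h0.le h).intervalIntegrable _ _
  · have := cont_inv3 h0.le h
    exact Continuous.aestronglyMeasurable (by fun_prop)
  · refine Filter.Eventually.of_forall fun θ _ x hx => ?_
    have h1 := delta_lb hx.1.le hx.2.le θ
    have h2 : Real.sqrt (1 - b) ≤ Real.sqrt (1 - x * Real.sin θ ^ 2) := Real.sqrt_le_sqrt h1
    have h3 : ((Real.sqrt (1 - x * Real.sin θ ^ 2)) ^ 3)⁻¹ ≤ ((Real.sqrt (1 - b)) ^ 3)⁻¹ := by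
      gcongr
    have h4 : 0 ≤ ((Real.sqrt (1 - x * Real.sin θ ^ 2)) ^ 3)⁻¹ := by positivity
    rw [Real.norm_of_nonneg (by positivity)]
    nlinarith [Real.sin_sq_le_one θ, sq_nonneg (Real.sin θ)]
  · simp
  · refine Filter.Eventually.of_forall fun θ _ x hx => ?_
    have hp := delta_pos hx.1.le (hx.2.trans hb1) θ
    have hs := Real.sqrt_pos.2 hp
    have e1 : HasDerivAt (fun x : ℝ => 1 - x * Real.sin θ ^ 2) (-(Real.sin θ ^ 2)) x := by
      simpa using ((hasDerivAt_id x).mul_const (Real.sin θ ^ 2)).const_sub 1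
    have e2 := (e1.sqrt hp.ne').inv hs.ne'
    refine e2.congr_deriv ?_
    field_simp

theorem sG_hasDerivAt0 {m : ℝ} (h0 : 0 < m) (h : m < 1) :
    HasDerivAt sG (∫ θ in (0:ℝ)..(Real.pi / 2),
      -(Real.sin θ ^ 2 / 2 * (Real.sqrt (1 - m * Real.sin θ ^ 2))⁻¹)) m := by
  set b := (1 + m) / 2 with hb
  have hmb : m < b := by linarith
  have hb1 : b < 1 := by linarith
  have hd : 0 < Real.sqrt (1 - b) := Real.sqrt_pos.2 (by linarith)
  refine (intervalIntegral.hasDerivAt_integral_of_dominated_loc_of_deriv_le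
    (μ := MeasureTheory.volume) (s := Set.Ioo 0 b)
    (bound := fun _ => (Real.sqrt (1 - b))⁻¹)
    (F' := fun m θ => -(Real.sin θ ^ 2 / 2 * (Real.sqrt (1 - m * Real.sin θ ^ 2))⁻¹))
    (Ioo_mem_nhds h0 hmb) ?_ ?_ ?_ ?_ ?_ ?_).2
  · refine Filter.Eventually.of_forall fun x => ?_
    exact Continuous.aestronglyMeasurable (by fun_prop)
  · exact Continuous.intervalIntegrable (by fun_prop) _ _
  · have := cont_inv h0.le h
    exact Continuous.aestronglyMeasurable (by fun_prop)
  · refine Filter.Eventually.of_forall fun θ _ x hx => ?_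
    have h1 := delta_lb hx.1.le hx.2.le θ
    have h2 : Real.sqrt (1 - b) ≤ Real.sqrt (1 - x * Real.sin θ ^ 2) := Real.sqrt_le_sqrt h1
    have h3 : (Real.sqrt (1 - x * Real.sin θ ^ 2))⁻¹ ≤ (Real.sqrt (1 - b))⁻¹ := by
      gcongr
    have h4 : 0 ≤ (Real.sqrt (1 - x * Real.sin θ ^ 2))⁻¹ := by positivity
    rw [norm_neg, Real.norm_of_nonneg (by positivity)]
    nlinarith [Real.sin_sq_le_one θ, sq_nonneg (Real.sin θ)]
  · simp
  · refine Filter.Eventually.of_forall fun θ _ x hx => ?_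
    have hp := delta_pos hx.1.le (hx.2.trans hb1) θ
    have hs := Real.sqrt_pos.2 hp
    have e1 : HasDerivAt (fun x : ℝ => 1 - x * Real.sin θ ^ 2) (-(Real.sin θ ^ 2)) x := by
      simpa using ((hasDerivAt_id x).mul_const (Real.sin θ ^ 2)).const_sub 1
    have e2 := (e1.sqrt hp.ne')
    refine e2.congr_deriv ?_
    field_simp

theorem sG_hasDerivAt {m : ℝ} (h0 : 0 < m) (h : m < 1) :
    HasDerivAt sG ((sG m - sF m) / (2 * m)) m := by
  convert sG_hasDerivAt0 h0 h using 1
  have hc := cont_inv h0.le h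
  unfold sG sF
  rw [← intervalIntegral.integral_sub (Continuous.intervalIntegrable (by fun_prop) _ _)
    (hc.intervalIntegrable _ _), ← intervalIntegral.integral_div]
  congr 1
  funext θ
  have hp := delta_pos h0.le h θ
  have hs := Real.sqrt_pos.2 hp
  have hq := Real.sq_sqrt hp.le
  field_simp
  linarith

theorem int3 {m : ℝ} (h0 : 0 < m) (h : m < 1) :
    (1 - m) * (∫ θ in (0:ℝ)..(Real.pi / 2), ((Real.sqrt (1 - m * Real.sin θ ^ 2)) ^ 3)⁻¹)
      = sG m := by
  have hc := cont_inv3 h0.le h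
  have key : ∫ θ in (0:ℝ)..(Real.pi / 2), (Real.sqrt (1 - m * Real.sin θ ^ 2) -
      (1 - m) * ((Real.sqrt (1 - m * Real.sin θ ^ 2)) ^ 3)⁻¹) = 0 := by
    rw [intervalIntegral.integral_eq_sub_of_hasDerivAt
      (f := fun θ => m * (Real.sin θ * Real.cos θ / Real.sqrt (1 - m * Real.sin θ ^ 2)))]
    · simp
    · intro θ _
      have hp := delta_pos h0.le h θ
      have hs := Real.sqrt_pos.2 hp
      have hq := Real.sq_sqrt hp.le
      have e1 : HasDerivAt (fun θ : ℝ => 1 - m * Real.sin θ ^ 2)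
          (-(m * (2 * Real.sin θ * Real.cos θ))) θ := by
        simpa using (((Real.hasDerivAt_sin θ).pow 2).const_mul m).const_sub 1
      have e2 := ((((Real.hasDerivAt_sin θ).mul (Real.hasDerivAt_cos θ)).div
        (e1.sqrt hp.ne') hs.ne')).const_mul m
      refine e2.congr_deriv ?_
      have hcs := Real.cos_sq' θ
      simp only [Pi.mul_apply]
      generalize Real.sqrt (1 - m * Real.sin θ ^ 2) = d at *
      field_simp
      generalize Real.cos θ = c at *
      generalize Real.sin θ = s at *
      have : d ^ 4 = (1 - m * s^2)^2 := by rw [← hq]; ring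
      ring_nf
      simp only [hq, hcs, this]
      ring_nf
    · exact Continuous.intervalIntegrable (by fun_prop) _ _
  rw [intervalIntegral.integral_sub (Continuous.intervalIntegrable (by fun_prop) _ _)
    (Continuous.intervalIntegrable (by fun_prop) _ _), intervalIntegral.integral_const_mul] at key
  unfold sG
  linarith

theorem sF_hasDerivAt {m : ℝ} (h0 : 0 < m) (h : m < 1) :
    HasDerivAt sF ((sG m - (1 - m) * sF m) / (2 * m * (1 - m))) m := by
  convert sF_hasDerivAt0 h0 h using 1
  have hc := cont_inv h0.le h
  have hc3 := cont_inv3 h0.le h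
  have h1 : (1 - m) ≠ 0 := by linarith
  rw [← int3 h0 h, ← mul_sub, mul_comm (2 * m), mul_div_mul_left _ _ h1]
  unfold sF
  rw [← intervalIntegral.integral_sub (hc3.intervalIntegrable _ _)
    (hc.intervalIntegrable _ _), ← intervalIntegral.integral_div]
  congr 1
  funext θ
  have hp := delta_pos h0.le h θ
  have hs := Real.sqrt_pos.2 hp
  have hq := Real.sq_sqrt hp.le
  field_simp
  linarith

theorem sF_lt {a b : ℝ} (h0 : 0 ≤ a) (hab : a < b) (h : b < 1) : sF a < sF b := by
  unfold sF
  apply intervalIntegral.integral_lt_integral_of_continuousOn_of_le_of_exists_lt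
    (by positivity) (cont_inv h0 (hab.trans h)).continuousOn
    (cont_inv (h0.trans hab.le) h).continuousOn
  · intro θ _
    have := Real.sqrt_pos.2 (delta_pos (h0.trans hab.le) h θ)
    gcongr
  · refine ⟨Real.pi / 2, ⟨by positivity, le_rfl⟩, ?_⟩
    have := Real.sqrt_pos.2 (delta_pos (h0.trans hab.le) h (Real.pi / 2))
    simp only [Real.sin_pi_div_two] at *
    have h2 : 0 ≤ 1 - b * 1 ^ 2 := by linarith
    gcongr

theorem sF_zero : sF 0 = Real.pi / 2 := by
  simp [sF]

theorem sG_one : sG 1 = 1 := by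
  have : sG 1 = ∫ θ in (0:ℝ)..(Real.pi / 2), Real.cos θ := by
    unfold sG
    apply intervalIntegral.integral_congr
    intro θ hθ
    rw [Set.uIcc_of_le (by positivity)] at hθ
    have := Real.cos_nonneg_of_mem_Icc (x := θ) ⟨by linarith [hθ.1, Real.pi_pos], hθ.2⟩
    simp only [one_mul, ← Real.cos_sq', Real.sqrt_sq this]
  rw [this]; simp

theorem sF_le {m : ℝ} (h0 : 0 ≤ m) (h : m < 1) : sF m ≤ Real.pi / 2 * (Real.sqrt (1 - m))⁻¹ := by
  have : ∫ θ in (0:ℝ)..(Real.pi / 2), (Real.sqrt (1 - m))⁻¹ = Real.pi / 2 * (Real.sqrt (1 - m))⁻¹ := by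
    simp
  rw [← this]
  apply intervalIntegral.integral_mono_on (by positivity)
    ((cont_inv h0 h).intervalIntegrable _ _) (by simp)
  intro θ _
  have h3 : 0 < Real.sqrt (1 - m) := Real.sqrt_pos.2 (by linarith)
  have := delta_lb h0 le_rfl θ
  gcongr

theorem sFG_le {m : ℝ} (h0 : 0 ≤ m) (h : m < 1) : 0 ≤ sF m - sG m ∧ sF m - sG m ≤ m * sF m := by
  have hc := cont_inv h0 h
  have e : sF m - sG m = ∫ θ in (0:ℝ)..(Real.pi / 2),
      m * (Real.sin θ ^ 2 * (Real.sqrt (1 - m * Real.sin θ ^ 2))⁻¹) := by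
    unfold sF sG
    rw [← intervalIntegral.integral_sub (hc.intervalIntegrable _ _)
      (Continuous.intervalIntegrable (by fun_prop) _ _)]
    congr 1
    funext θ
    have hp := delta_pos h0 h θ
    have hs := Real.sqrt_pos.2 hp
    have hq := Real.sq_sqrt hp.le
    field_simp
    linarith
  rw [e]
  constructor
  · apply intervalIntegral.integral_nonneg (by positivity)
    intro θ _
    positivity
  · unfold sF
    rw [← intervalIntegral.integral_const_mul]
    apply intervalIntegral.integral_mono_on (by positivity)
      (Continuous.intervalIntegrable (by fun_prop) _ _)
      (Continuous.intervalIntegrable (by fun_prop) _ _)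
    intro θ _
    have h4 : 0 ≤ (Real.sqrt (1 - m * Real.sin θ ^ 2))⁻¹ := by positivity
    have := Real.sin_sq_le_one θ
    have : Real.sin θ ^ 2 * (Real.sqrt (1 - m * Real.sin θ ^ 2))⁻¹ ≤ (Real.sqrt (1 - m * Real.sin θ ^ 2))⁻¹ := by nlinarith
    exact mul_le_mul_of_nonneg_left this h0

noncomputable def sL (m : ℝ) : ℝ :=
  sG m * sF (1 - m) + sG (1 - m) * sF m - sF m * sF (1 - m)

theorem hasDerivAt_refl {f : ℝ → ℝ} {d m : ℝ} (h : HasDerivAt f d (1 - m)) :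
    HasDerivAt (fun x => f (1 - x)) (-d) m := by
  have := HasDerivAt.comp m (h₂ := f) (h := fun x => 1 - x) h ((hasDerivAt_id m).const_sub 1)
  simpa [Function.comp_def] using this

theorem sL_hasDerivAt {m : ℝ} (h0 : 0 < m) (h : m < 1) : HasDerivAt sL 0 m := by
  have h0' : 0 < 1 - m := by linarith
  have h' : 1 - m < 1 := by linarith
  have f1 := sF_hasDerivAt h0 h
  have g1 := sG_hasDerivAt h0 h
  have f2 := hasDerivAt_refl (sF_hasDerivAt h0' h')
  have g2 := hasDerivAt_refl (sG_hasDerivAt h0' h')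
  refine (((g1.mul f2).add (g2.mul f1)).sub (f1.mul f2)).congr_deriv ?_
  have : 1 - (1 - m) = m := by ring
  rw [this]
  field_simp
  ring

theorem sL_const {a b : ℝ} (ha : a ∈ Set.Ioo (0:ℝ) 1) (hb : b ∈ Set.Ioo (0:ℝ) 1) :
    sL a = sL b := by
  refine (convex_Ioo (0:ℝ) 1).is_const_of_fderivWithin_eq_zero (𝕜 := ℝ) ?_ ?_ ha hb
  · intro x hx
    exact (sL_hasDerivAt hx.1 hx.2).differentiableAt.differentiableWithinAt
  · intro x hx
    have := (sL_hasDerivAt hx.1 hx.2).hasFDerivAt.hasFDerivWithinAt (s := Set.Ioo (0:ℝ) 1)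
    rw [this.fderivWithin (isOpen_Ioo.uniqueDiffWithinAt hx)]
    ext; simp

theorem sF_ge {m : ℝ} (h0 : 0 ≤ m) (h : m < 1) : Real.pi / 2 ≤ sF m := by
  rcases h0.eq_or_lt with rfl | h0
  · exact sF_zero.ge
  · rw [← sF_zero]; exact (sF_lt le_rfl h0 h).le

theorem sF_pos {m : ℝ} (h0 : 0 ≤ m) (h : m < 1) : 0 < sF m :=
  lt_of_lt_of_le (by positivity) (sF_ge h0 h)

open Topology in
theorem sL_tendsto : Tendsto sL (𝓝[>] 0) (𝓝 (Real.pi / 2)) := by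
  have hI : Set.Ioo (0:ℝ) 1 ∈ 𝓝[>] (0:ℝ) := Ioo_mem_nhdsGT one_pos
  have hid : Tendsto (fun m : ℝ => m) (𝓝[>] 0) (𝓝 0) := nhdsWithin_le_nhds
  have tF : Tendsto sF (𝓝[>] 0) (𝓝 (Real.pi / 2)) := by
    have hu : Tendsto (fun m : ℝ => Real.pi / 2 * (Real.sqrt (1 - m))⁻¹) (𝓝[>] 0)
        (𝓝 (Real.pi / 2)) := by
      have : ContinuousAt (fun m : ℝ => Real.pi / 2 * (Real.sqrt (1 - m))⁻¹) 0 := by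
        refine ContinuousAt.mul continuousAt_const (ContinuousAt.inv₀ (by fun_prop) (by simp))
      have := this.tendsto.comp hid
      simpa [Function.comp_def] using this
    refine tendsto_of_tendsto_of_tendsto_of_le_of_le' tendsto_const_nhds hu ?_ ?_
    · filter_upwards [hI] with m hm using sF_ge hm.1.le hm.2
    · filter_upwards [hI] with m hm using sF_le hm.1.le hm.2
  have tG : Tendsto (fun m => sG (1 - m)) (𝓝[>] 0) (𝓝 1) := by
    have : Continuous (fun m => sG (1 - m)) := sG_cont.comp (by fun_prop)
    have := (this.tendsto 0).comp hid
    simpa [sG_one, Function.comp_def] using this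
  have tR : Tendsto (fun m => (sF m - sG m) * sF (1 - m)) (𝓝[>] 0) (𝓝 0) := by
    have hu : Tendsto (fun m : ℝ => Real.sqrt m * sF m * (Real.pi / 2)) (𝓝[>] 0)
        (𝓝 0) := by
      have h1 := (Real.continuous_sqrt.tendsto 0).comp hid
      have := (h1.mul tF).mul_const (Real.pi / 2)
      simpa [Function.comp_def] using this
    refine tendsto_of_tendsto_of_tendsto_of_le_of_le' tendsto_const_nhds hu ?_ ?_
    · filter_upwards [hI] with m hm
      exact mul_nonneg (sFG_le hm.1.le hm.2).1
        (sF_pos (by linarith [hm.2]) (by linarith [hm.1])).le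
    · filter_upwards [hI] with m hm
      have h1 := (sFG_le hm.1.le hm.2)
      have h2 := sF_le (m := 1 - m) (by linarith [hm.2]) (by linarith [hm.1])
      rw [sub_sub_cancel] at h2
      have h3 := sF_pos hm.1.le hm.2
      have h4 := sF_pos (m := 1 - m) (by linarith [hm.2]) (by linarith [hm.1])
      have h5 : 0 < Real.sqrt m := Real.sqrt_pos.2 hm.1
      calc (sF m - sG m) * sF (1 - m) ≤ (m * sF m) * (Real.pi / 2 * (Real.sqrt m)⁻¹) :=
            mul_le_mul h1.2 h2 h4.le (mul_nonneg hm.1.le h3.le)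
        _ = _ := by
          have := Real.sq_sqrt hm.1.le
          field_simp
          linear_combination -this
  have := (tG.mul tF).sub tR
  simp only [one_mul, sub_zero] at this
  refine this.congr fun m => ?_
  unfold sL
  ring

theorem legendre {m : ℝ} (hm : m ∈ Set.Ioo (0:ℝ) 1) : sL m = Real.pi / 2 := by
  refine tendsto_nhds_unique (Tendsto.congr' ?_ tendsto_const_nhds) sL_tendsto
  filter_upwards [Ioo_mem_nhdsGT one_pos] with x hx using sL_const hm hx

noncomputable def sM (m : ℝ) : ℝ := Real.pi / 2 * sF (1 - m) / sF m

theorem sM_hasDerivAt {m : ℝ} (h0 : 0 < m) (h : m < 1) :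
    HasDerivAt sM (-(Real.pi ^ 2 / (8 * m * (1 - m) * sF m ^ 2))) m := by
  have h0' : 0 < 1 - m := by linarith
  have h' : 1 - m < 1 := by linarith
  have f1 := sF_hasDerivAt h0 h
  have f2 := hasDerivAt_refl (sF_hasDerivAt h0' h')
  have hp := sF_pos h0.le h
  refine ((f2.const_mul (Real.pi / 2)).div f1 hp.ne').congr_deriv ?_
  have hL := legendre ⟨h0, h⟩
  unfold sL at hL
  have : 1 - (1 - m) = m := by ring
  rw [this]
  field_simp
  linear_combination (-8) * hL

theorem log_hasDerivAt {m : ℝ} (h0 : 0 < m) (h : m < 1) :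
    HasDerivAt (fun m => Real.log (1 - m) - Real.log m) (-(1 / (m * (1 - m)))) m := by
  have h0' : 0 < 1 - m := by linarith
  have := (hasDerivAt_refl (Real.hasDerivAt_log h0'.ne')).sub (Real.hasDerivAt_log h0.ne')
  refine this.congr_deriv ?_
  field_simp
  ring

theorem comb_hasDerivAt (c : ℝ) {m : ℝ} (h0 : 0 < m) (h : m < 1) :
    HasDerivAt (fun m => Real.log (1 - m) - Real.log m - c * sM m)
      (-((1 / (m * (1 - m))) * (1 - c * Real.pi ^ 2 / (8 * sF m ^ 2)))) m := by
  have h0' : 0 < 1 - m := by linarith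
  have hp := sF_pos h0.le h
  refine ((log_hasDerivAt h0 h).sub ((sM_hasDerivAt h0 h).const_mul c)).congr_deriv ?_
  field_simp
  ring

theorem lower {a b : ℝ} (h0 : 0 < a) (hab : a < b) (h : b < 1) :
    Real.log (1 - b) - Real.log b - 2 * sM b < Real.log (1 - a) - Real.log a - 2 * sM a := by
  have : StrictAntiOn (fun m => Real.log (1 - m) - Real.log m - 2 * sM m) (Set.Ioo 0 1) := by
    refine strictAntiOn_of_hasDerivWithinAt_neg (convex_Ioo 0 1)
      (fun x hx => (comb_hasDerivAt 2 hx.1 hx.2).continuousAt.continuousWithinAt)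
      (fun x hx => ?_) (fun x hx => ?_)
      (f' := fun m => -((1 / (m * (1 - m))) * (1 - 2 * Real.pi ^ 2 / (8 * sF m ^ 2))))
    · rw [interior_Ioo] at hx
      exact (comb_hasDerivAt 2 hx.1 hx.2).hasDerivWithinAt
    · rw [interior_Ioo] at hx
      have h1 : 0 < 1 - x := by linarith [hx.2]
      have h2 := hx.1
      have h3 := sF_lt le_rfl hx.1 hx.2
      rw [sF_zero] at h3
      have h4 : 2 * Real.pi ^ 2 / (8 * sF x ^ 2) < 1 := by
        have := Real.pi_pos
        rw [div_lt_one (by have := sF_pos hx.1.le hx.2; positivity)]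
        nlinarith
      rw [neg_lt_zero]
      exact mul_pos (by positivity) (by linarith)
  exact this ⟨h0, hab.trans h⟩ ⟨h0.trans hab, h⟩ hab

theorem upper {a b : ℝ} (h0 : 0 < a) (hab : a < b) (h : b < 1) :
    Real.log (1 - a) - Real.log a - (8 * sF b ^ 2 / Real.pi ^ 2) * sM a <
    Real.log (1 - b) - Real.log b - (8 * sF b ^ 2 / Real.pi ^ 2) * sM b := by
  set c := 8 * sF b ^ 2 / Real.pi ^ 2 with hc
  have : StrictMonoOn (fun m => Real.log (1 - m) - Real.log m - c * sM m) (Set.Ioc 0 b) := by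
    refine strictMonoOn_of_hasDerivWithinAt_pos (convex_Ioc 0 b)
      (fun x hx => (comb_hasDerivAt c hx.1 (hx.2.trans_lt h)).continuousAt.continuousWithinAt)
      (fun x hx => ?_) (fun x hx => ?_)
      (f' := fun m => -((1 / (m * (1 - m))) * (1 - c * Real.pi ^ 2 / (8 * sF m ^ 2))))
    · rw [interior_Ioc] at hx
      exact (comb_hasDerivAt c hx.1 (hx.2.trans h)).hasDerivWithinAt
    · rw [interior_Ioc] at hx
      have hx1 := hx.2.trans h
      have h1 : 0 < 1 - x := by linarith
      have h2 := hx.1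
      have h3 := sF_lt hx.1.le hx.2 h
      have h5 := sF_pos hx.1.le hx1
      have h4 : 1 < c * Real.pi ^ 2 / (8 * sF x ^ 2) := by
        have := Real.pi_pos
        rw [one_lt_div (by positivity), hc, div_mul_cancel₀ _ (by positivity)]
        nlinarith
      rw [← mul_neg]
      exact mul_pos (by positivity) (by linarith)
  exact this ⟨h0, hab.le⟩ ⟨h0.trans hab, le_rfl⟩ hab

theorem sM_pos {m : ℝ} (h0 : 0 < m) (h : m < 1) : 0 < sM m := by
  have h1 := sF_pos h0.le h
  have h2 := sF_pos (m := 1 - m) (by linarith) (by linarith)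
  unfold sM
  positivity

theorem exists_sM {b K : ℝ} (h0 : 0 < b) (h : b < 1) (hK : 1 < K) :
    ∃ a, 0 < a ∧ a < b ∧ sM a = K * sM b := by
  set c := 8 * sF b ^ 2 / Real.pi ^ 2 with hc
  have hcp : 0 < c := by have := sF_pos h0.le h; positivity
  set B := Real.log (1 - b) - Real.log b - c * sM b with hB
  have hlim : Tendsto (fun m : ℝ => -Real.log m) (nhdsWithin 0 (Set.Ioi 0)) atTop :=
    tendsto_neg_atBot_atTop.comp Real.tendsto_log_nhdsGT_zero
  have hev := (hlim.eventually_gt_atTop (c * (K * sM b) + B - Real.log (1 - b))).and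
    (Ioo_mem_nhdsGT h0 : ∀ᶠ m in nhdsWithin (0:ℝ) (Set.Ioi 0), m ∈ Set.Ioo 0 b)
  obtain ⟨a, ha, ha0, hab⟩ := hev.exists
  have h1 := upper ha0 hab h
  rw [← hc] at h1
  have h2 : Real.log (1 - b) ≤ Real.log (1 - a) := Real.log_le_log (by linarith) (by linarith)
  have h3 : c * (K * sM b) ≤ c * sM a := by linarith
  have h4 := le_of_mul_le_mul_left h3 hcp
  have hcont : ContinuousOn sM (Set.Icc a b) := fun x hx =>
    (sM_hasDerivAt (ha0.trans_le hx.1) (hx.2.trans_lt h)).continuousAt.continuousWithinAt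
  have hMb := sM_pos h0 h
  obtain ⟨x, hx, hxe⟩ := intermediate_value_Icc' hab.le hcont ⟨by nlinarith, h4⟩
  refine ⟨x, ha0.trans_le hx.1, lt_of_le_of_ne hx.2 ?_, hxe⟩
  rintro rfl
  nlinarith

theorem mu_eq {r : ℝ} (hr : r ^ 2 ≤ 1) : mu r = sM (r ^ 2) := by
  have h : 0 ≤ 1 - r ^ 2 := by linarith
  unfold mu sM
  rw [ellK_eq hr, ellK_eq (by rw [Real.sq_sqrt h]; nlinarith), Real.sq_sqrt h]

theorem stmt_11 (eta : ℝ → ℝ → ℝ)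
    (heta : ∀ K t : ℝ, 0 < K → 0 < t → ∀ u ∈ Set.Ioo (0:ℝ) 1,
      mu u = K * mu (1 / Real.sqrt (1 + t)) → eta K t = 1 / u ^ 2 - 1) :
    ∀ t K : ℝ, 0 < t → 1 < K →
      t * Real.exp (2 * (K - 1) * mu (1 / Real.sqrt (1 + t))) < eta K t ∧
      eta K t < t * Real.exp (4 * (K - 1) * ellK (Real.sqrt (t / (1 + t))) *
        ellK (1 / Real.sqrt (1 + t)) / Real.pi) := by
  intro t K ht hK
  obtain ⟨b, hb⟩ : ∃ b, b = 1 / (1 + t) := ⟨_, rfl⟩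
  have hb0 : 0 < b := by rw [hb]; positivity
  have hb1 : b < 1 := by rw [hb, div_lt_one (by positivity)]; linarith
  have hs : (1 / Real.sqrt (1 + t)) ^ 2 = b := by
    rw [div_pow, Real.sq_sqrt (by positivity), one_pow, hb]
  have hs' : (Real.sqrt (t / (1 + t))) ^ 2 = 1 - b := by
    rw [Real.sq_sqrt (by positivity), hb]; field_simp; ring
  have htb : t = (1 - b) / b := by rw [hb]; field_simp; ring
  obtain ⟨a, ha0, hab, hM⟩ := exists_sM hb0 hb1 hK
  have ha1 := hab.trans hb1
  have hmu : mu (1 / Real.sqrt (1 + t)) = sM b := by rw [mu_eq (by linarith), hs]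
  have hu : Real.sqrt a ^ 2 = a := Real.sq_sqrt ha0.le
  have he := heta K t (by linarith) ht (Real.sqrt a)
    ⟨Real.sqrt_pos.2 ha0, by rw [Real.sqrt_lt' one_pos]; linarith⟩
    (by rw [hmu, mu_eq (by linarith), hu, hM])
  rw [hu] at he
  have he2 : eta K t = (1 - a) / a := by rw [he]; field_simp
  have e1 : eta K t = Real.exp (Real.log (1 - a) - Real.log a) := by
    rw [he2, Real.exp_sub, Real.exp_log (by linarith), Real.exp_log ha0]
  have e2 : t = Real.exp (Real.log (1 - b) - Real.log b) := by
    rw [Real.exp_sub, Real.exp_log (by linarith), Real.exp_log hb0, htb]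
  have hl := lower ha0 hab hb1
  have hup := upper ha0 hab hb1
  rw [hM] at hl hup
  rw [hmu, ellK_eq (by linarith), ellK_eq (by linarith), hs, hs', e1]
  constructor
  · calc t * Real.exp (2 * (K - 1) * sM b)
        = Real.exp (Real.log (1 - b) - Real.log b + 2 * (K - 1) * sM b) := by
          rw [Real.exp_add, ← e2]
      _ < _ := Real.exp_lt_exp.2 (by linarith)
  · have e3 : 8 * sF b ^ 2 / Real.pi ^ 2 * sM b = 4 * sF (1 - b) * sF b / Real.pi := by
      have := sF_pos hb0.le hb1
      unfold sM
      field_simp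
      ring
    have e4 : 4 * (K - 1) * sF (1 - b) * sF b / Real.pi =
        (K - 1) * (8 * sF b ^ 2 / Real.pi ^ 2 * sM b) := by rw [e3]; ring
    rw [e4]
    calc _ < Real.exp (Real.log (1 - b) - Real.log b +
          (K - 1) * (8 * sF b ^ 2 / Real.pi ^ 2 * sM b)) := Real.exp_lt_exp.2 (by linarith)
      _ = _ := by rw [Real.exp_add, ← e2]
end

section
/- Let c = ((2/π)·𝒦(1/√2))²·e^{−π}. For every K > 1, 1 + c·(e^{πK} − e^{π}) < λ(K) < 1 + (1/16)·(e^{πK} − e^{π}). -/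
open Set Filter

open Real in
/-- First kind integral as a function of the parameter m = r². -/
noncomputable def eA (m : ℝ) : ℝ := ∫ θ in (0:ℝ)..(π / 2), (√(1 - m * sin θ ^ 2))⁻¹

open Real in
/-- Second kind integral as a function of the parameter m = r². -/
noncomputable def eE (m : ℝ) : ℝ := ∫ θ in (0:ℝ)..(π / 2), √(1 - m * sin θ ^ 2)

namespace EllAux
open Real

lemma sin_sq_le (θ : ℝ) : sin θ ^ 2 ≤ 1 := by nlinarith [sin_sq_add_cos_sq θ, sq_nonneg (cos θ)]

lemma D_ge {m M : ℝ} (h : m ≤ M) (hM : 0 ≤ M) (θ : ℝ) : 1 - M ≤ 1 - m * sin θ ^ 2 := by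
  nlinarith [sin_sq_le θ, sq_nonneg (sin θ)]

lemma D_pos {m : ℝ} (h : m < 1) (θ : ℝ) : 0 < 1 - m * sin θ ^ 2 := by
  rcases le_or_gt m 0 with h0 | h0
  · nlinarith [sq_nonneg (sin θ)]
  · have := D_ge le_rfl h0.le θ
    linarith

lemma ellK_eq {r : ℝ} (h : r ^ 2 < 1) : ellK r = eA (r ^ 2) := by
  unfold ellK eA
  congr 1
  ext θ
  rw [rpow_neg (D_pos h θ).le, ← sqrt_eq_rpow]

lemma cont_w (m : ℝ) : Continuous fun θ => √(1 - m * sin θ ^ 2) := by fun_prop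

lemma w_pos {m : ℝ} (h : m < 1) (θ : ℝ) : 0 < √(1 - m * sin θ ^ 2) := sqrt_pos.2 (D_pos h θ)

lemma cont_winv {m : ℝ} (h : m < 1) : Continuous fun θ => (√(1 - m * sin θ ^ 2))⁻¹ :=
  (cont_w m).inv₀ fun θ => (w_pos h θ).ne'

lemma hasDeriv_w {m : ℝ} (h : m < 1) (θ : ℝ) :
    HasDerivAt (fun m => √(1 - m * sin θ ^ 2)) (-(sin θ ^ 2) / (2 * √(1 - m * sin θ ^ 2))) m := by
  have : HasDerivAt (fun m => 1 - m * sin θ ^ 2) (-(sin θ ^ 2)) m := by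
    simpa using ((hasDerivAt_id m).mul_const (sin θ ^ 2)).const_sub 1
  exact this.sqrt (D_pos h θ).ne'

lemma hasDeriv_winv {m : ℝ} (h : m < 1) (θ : ℝ) :
    HasDerivAt (fun m => (√(1 - m * sin θ ^ 2))⁻¹)
      (sin θ ^ 2 / (2 * √(1 - m * sin θ ^ 2) ^ 3)) m := by
  have h1 := (hasDeriv_w h θ).inv (w_pos h θ).ne'
  refine HasDerivAt.congr_deriv h1 ?_
  have := (w_pos h θ).ne'
  generalize √(1 - m * sin θ ^ 2) = w at *
  field_simp

lemma hasDeriv_gen (f f' : ℝ → ℝ → ℝ) (m : ℝ) (h0 : 0 < m) (h : m < 1)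
    (hf : ∀ x, x < 1 → Continuous (f x)) (hf' : Continuous (f' m))
    (hd : ∀ x, x < 1 → ∀ θ, HasDerivAt (fun x => f x θ) (f' x θ) x)
    (C : ℝ) (hC : ∀ x, x ≤ (1 + m) / 2 → ∀ θ, |f' x θ| ≤ C) :
    HasDerivAt (fun x => ∫ θ in (0:ℝ)..(π / 2), f x θ) (∫ θ in (0:ℝ)..(π / 2), f' m θ) m := by
  have hs : Set.Iio ((1 + m) / 2) ∈ nhds m := Iio_mem_nhds (by linarith)
  refine (intervalIntegral.hasDerivAt_integral_of_dominated_loc_of_deriv_le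
    (bound := fun _ => C) hs ?_ ?_ ?_ ?_ ?_ ?_).2
  · filter_upwards [hs] with x hx
    exact (hf x (by simp at hx; linarith)).aestronglyMeasurable
  · exact (hf m h).intervalIntegrable _ _
  · exact hf'.aestronglyMeasurable
  · refine .of_forall fun θ _ x hx => ?_
    exact hC x (le_of_lt hx) θ
  · exact intervalIntegrable_const
  · refine .of_forall fun θ _ x hx => ?_
    exact hd x (by simp at hx; linarith) θ

lemma w_ge {m x : ℝ} (h0 : 0 < m) (hx : x ≤ (1 + m) / 2) (θ : ℝ) :
    √((1 - m) / 2) ≤ √(1 - x * sin θ ^ 2) := by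
  apply sqrt_le_sqrt
  have := D_ge hx (by linarith) θ
  linarith

lemma int_w3 {m : ℝ} (h : m < 1) :
    (1 - m) * ∫ θ in (0:ℝ)..(π / 2), (√(1 - m * sin θ ^ 2) ^ 3)⁻¹ = eE m := by
  have hd : ∀ θ : ℝ, HasDerivAt (fun θ => sin θ * cos θ / √(1 - m * sin θ ^ 2))
      ((cos θ ^ 2 - sin θ ^ 2) / √(1 - m * sin θ ^ 2) +
        m * sin θ ^ 2 * cos θ ^ 2 / √(1 - m * sin θ ^ 2) ^ 3) θ := by
    intro θ
    have hw := (w_pos h θ).ne'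
    have h1 : HasDerivAt (fun θ => 1 - m * sin θ ^ 2) (-(m * (2 * sin θ * cos θ))) θ := by
      have := (((hasDerivAt_sin θ).pow 2).const_mul m).const_sub 1
      simpa using this
    have h2 := (((hasDerivAt_sin θ).mul (hasDerivAt_cos θ)).div
      (h1.sqrt (D_pos h θ).ne') hw)
    refine HasDerivAt.congr_deriv h2 ?_
    simp only [Pi.mul_apply]
    generalize √(1 - m * sin θ ^ 2) = w at *
    field_simp
    ring
  have c1 := cont_w m
  have c3 : Continuous fun θ => (√(1 - m * sin θ ^ 2) ^ 3)⁻¹ :=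
    (c1.pow 3).inv₀ fun θ => (pow_pos (w_pos h θ) 3).ne'
  have c4 : Continuous fun θ => ((cos θ ^ 2 - sin θ ^ 2) / √(1 - m * sin θ ^ 2) +
        m * sin θ ^ 2 * cos θ ^ 2 / √(1 - m * sin θ ^ 2) ^ 3) := by
    refine Continuous.add (Continuous.div (by fun_prop) c1 fun θ => (w_pos h θ).ne') 
      (Continuous.div (by fun_prop) (c1.pow 3) fun θ => (pow_pos (w_pos h θ) 3).ne')
  have hi := intervalIntegral.integral_eq_sub_of_hasDerivAt (a := 0) (b := π / 2)
    (fun θ _ => hd θ) (c4.intervalIntegrable _ _)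
  simp only [sin_zero, zero_mul, zero_div, cos_pi_div_two, mul_zero, sub_zero] at hi
  rw [← intervalIntegral.integral_const_mul]
  have : ∀ θ : ℝ, (1 - m) * (√(1 - m * sin θ ^ 2) ^ 3)⁻¹ = √(1 - m * sin θ ^ 2) -
     m * ((cos θ ^ 2 - sin θ ^ 2) / √(1 - m * sin θ ^ 2) +
        m * sin θ ^ 2 * cos θ ^ 2 / √(1 - m * sin θ ^ 2) ^ 3) := by
    intro θ
    have hw := (w_pos h θ).ne'
    have hs := sq_sqrt (D_pos h θ).le
    set w := √(1 - m * sin θ ^ 2)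
    have h4 : w ^ 4 = (1 - m * sin θ ^ 2) ^ 2 := by rw [← hs]; ring
    field_simp
    rw [h4, hs, cos_sq']
    ring
  simp_rw [this]
  rw [intervalIntegral.integral_sub (c1.intervalIntegrable _ _)
    ((c4.const_mul m).intervalIntegrable _ _), intervalIntegral.integral_const_mul, hi]
  simp [eE]

lemma deriv_eE {m : ℝ} (h0 : 0 < m) (h : m < 1) :
    HasDerivAt eE ((eE m - eA m) / (2 * m)) m := by
  have hw0 : 0 < √((1 - m) / 2) := sqrt_pos.2 (by linarith)
  have key := hasDeriv_gen (fun m θ => √(1 - m * sin θ ^ 2))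
    (fun m θ => -(sin θ ^ 2) / (2 * √(1 - m * sin θ ^ 2))) m h0 h
    (fun x _ => cont_w x)
    (Continuous.div (by fun_prop) (by fun_prop) fun θ => by have := w_pos h θ; positivity)
    (fun x hx θ => hasDeriv_w hx θ) (1 / (2 * √((1 - m) / 2)))
    (by
      intro x hx θ
      have h1 := w_ge h0 hx θ
      rw [abs_div, abs_neg, abs_of_nonneg (sq_nonneg _), abs_of_nonneg (by positivity)]
      gcongr
      exact sin_sq_le θ)
  have e : ∫ θ in (0:ℝ)..(π / 2), -(sin θ ^ 2) / (2 * √(1 - m * sin θ ^ 2)) =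
      (eE m - eA m) / (2 * m) := by
    unfold eE eA
    rw [← intervalIntegral.integral_sub ((cont_w m).intervalIntegrable _ _)
      ((cont_winv h).intervalIntegrable _ _), ← intervalIntegral.integral_div]
    congr 1
    ext θ
    have hw := (w_pos h θ).ne'
    have hs := sq_sqrt (D_pos h θ).le
    generalize √(1 - m * sin θ ^ 2) = w at *
    field_simp
    rw [hs]; ring
  rw [← e]; exact key

lemma deriv_eA {m : ℝ} (h0 : 0 < m) (h : m < 1) :
    HasDerivAt eA ((eE m - (1 - m) * eA m) / (2 * m * (1 - m))) m := by
  have hw0 : 0 < √((1 - m) / 2) := sqrt_pos.2 (by linarith)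
  have key := hasDeriv_gen (fun m θ => (√(1 - m * sin θ ^ 2))⁻¹)
    (fun m θ => sin θ ^ 2 / (2 * √(1 - m * sin θ ^ 2) ^ 3)) m h0 h
    (fun x hx => cont_winv hx)
    (Continuous.div (by fun_prop) (by fun_prop) fun θ => by have := w_pos h θ; positivity)
    (fun x hx θ => hasDeriv_winv hx θ) (1 / (2 * √((1 - m) / 2) ^ 3))
    (by
      intro x hx θ
      have h1 := w_ge h0 hx θ
      rw [abs_div, abs_of_nonneg (sq_nonneg _), abs_of_nonneg (by positivity)]
      gcongr
      exact sin_sq_le θ)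
  have c3 : Continuous fun θ => (√(1 - m * sin θ ^ 2) ^ 3)⁻¹ :=
    ((cont_w m).pow 3).inv₀ fun θ => (pow_pos (w_pos h θ) 3).ne'
  have e : ∫ θ in (0:ℝ)..(π / 2), sin θ ^ 2 / (2 * √(1 - m * sin θ ^ 2) ^ 3) =
      ((∫ θ in (0:ℝ)..(π / 2), (√(1 - m * sin θ ^ 2) ^ 3)⁻¹) - eA m) / (2 * m) := by
    unfold eA
    rw [← intervalIntegral.integral_sub (c3.intervalIntegrable _ _)
      ((cont_winv h).intervalIntegrable _ _), ← intervalIntegral.integral_div]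
    congr 1
    ext θ
    have hw := (w_pos h θ).ne'
    have hs := sq_sqrt (D_pos h θ).le
    generalize √(1 - m * sin θ ^ 2) = w at *
    field_simp
    rw [hs]; ring
  have e2 : (eE m - (1 - m) * eA m) / (2 * m * (1 - m)) =
      ((∫ θ in (0:ℝ)..(π / 2), (√(1 - m * sin θ ^ 2) ^ 3)⁻¹) - eA m) / (2 * m) := by
    rw [← int_w3 h]
    have : 1 - m ≠ 0 := by linarith
    field_simp
  rw [e2, ← e]; exact key



lemma eA_ge {m : ℝ} (h0 : 0 ≤ m) (h : m < 1) : π / 2 ≤ eA m := by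
  have : ∫ θ in (0:ℝ)..(π / 2), (1:ℝ) ≤ eA m := by
    refine intervalIntegral.integral_mono_on (by positivity) intervalIntegrable_const
      ((cont_winv h).intervalIntegrable _ _) fun θ _ => ?_
    rw [one_le_inv₀ (w_pos h θ), sqrt_le_one]
    nlinarith [sq_nonneg (sin θ)]
  simpa using this

lemma eA_pos {m : ℝ} (h0 : 0 ≤ m) (h : m < 1) : 0 < eA m :=
  lt_of_lt_of_le (by positivity) (eA_ge h0 h)

lemma eA_le {m : ℝ} (h0 : 0 ≤ m) (h : m < 1) : eA m ≤ π / 2 * (√(1 - m))⁻¹ := by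
  have : eA m ≤ ∫ θ in (0:ℝ)..(π / 2), (√(1 - m))⁻¹ := by
    refine intervalIntegral.integral_mono_on (by positivity) 
      ((cont_winv h).intervalIntegrable _ _) intervalIntegrable_const fun θ _ => ?_
    have : 0 < √(1 - m) := sqrt_pos.2 (by linarith)
    have h2 := sqrt_le_sqrt (D_ge le_rfl h0 θ)
    gcongr
  simpa using this

lemma eE_eA {m : ℝ} (h0 : 0 ≤ m) (h : m < 1) :
    eA m - m * eA m ≤ eE m ∧ eE m ≤ eA m := by
  have hI := (cont_winv h).intervalIntegrable (μ := MeasureTheory.volume) 0 (π / 2)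
  constructor
  · have : ∫ θ in (0:ℝ)..(π / 2), (1 - m) * (√(1 - m * sin θ ^ 2))⁻¹ ≤ eE m := by
      refine intervalIntegral.integral_mono_on (by positivity) (hI.const_mul _)
        ((cont_w m).intervalIntegrable _ _) fun θ _ => ?_
      have hw := w_pos h θ
      have hs := sq_sqrt (D_pos h θ).le
      rw [← div_eq_mul_inv, div_le_iff₀ hw]
      nlinarith [D_ge le_rfl h0 θ]
    rw [intervalIntegral.integral_const_mul] at this
    unfold eA at *
    linarith
  · refine intervalIntegral.integral_mono_on (by positivity) 
        ((cont_w m).intervalIntegrable _ _) hI fun θ _ => ?_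
    have hw := w_pos h θ
    have hs := sq_sqrt (D_pos h θ).le
    rw [← one_div, le_div_iff₀ hw]
    nlinarith [sq_nonneg (sin θ)]

lemma eE_near {t : ℝ} (h0 : 0 ≤ t) (h : t < 1) :
    1 ≤ eE (1 - t) ∧ eE (1 - t) ≤ 1 + √t * (π / 2) := by
  have hc : ∀ θ ∈ Icc 0 (π / 2), 0 ≤ cos θ := fun θ hθ =>
    cos_nonneg_of_mem_Icc ⟨by linarith [hθ.1, pi_pos], hθ.2⟩
  have hD : ∀ θ : ℝ, 1 - (1 - t) * sin θ ^ 2 = cos θ ^ 2 + t * sin θ ^ 2 := by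
    intro θ; rw [cos_sq']; ring
  have i1 : ∫ θ in (0:ℝ)..(π / 2), cos θ = 1 := by simp
  constructor
  · refine i1.symm.le.trans ?_
    refine intervalIntegral.integral_mono_on (by positivity) 
        (continuous_cos.intervalIntegrable _ _) ((cont_w _).intervalIntegrable _ _) fun θ hθ => ?_
    apply le_sqrt_of_sq_le
    rw [hD]
    nlinarith [sq_nonneg (sin θ)]
  · have : eE (1 - t) ≤ ∫ θ in (0:ℝ)..(π / 2), (cos θ + √t) := by
      refine intervalIntegral.integral_mono_on (by positivity) 
        ((cont_w _).intervalIntegrable _ _) ((by fun_prop : Continuous _).intervalIntegrable _ _) 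
        fun θ hθ => ?_
      rw [sqrt_le_left (by have := hc θ hθ; positivity), hD]
      nlinarith [sq_sqrt h0, sqrt_nonneg t, hc θ hθ, mul_nonneg (sqrt_nonneg t) (hc θ hθ), sin_sq_le θ]
    rw [intervalIntegral.integral_add (continuous_cos.intervalIntegrable _ _)
      intervalIntegrable_const, i1] at this
    simp at this
    linarith

lemma deriv_eA' {t : ℝ} (h0 : 0 < t) (h : t < 1) :
    HasDerivAt (fun t => eA (1 - t)) (-((eE (1 - t) - t * eA (1 - t)) / (2 * t * (1 - t)))) t := by
  have h1 := deriv_eA (m := 1 - t) (by linarith) (by linarith)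
  have h2 : HasDerivAt (fun t : ℝ => 1 - t) (-1) t := by
    simpa using (hasDerivAt_id t).const_sub 1
  refine (h1.comp t h2).congr_deriv ?_
  have e : 1 - (1 - t) = t := by ring
  rw [e]
  have : 1 - t ≠ 0 := by linarith
  field_simp

lemma deriv_eE' {t : ℝ} (h0 : 0 < t) (h : t < 1) :
    HasDerivAt (fun t => eE (1 - t)) (-((eE (1 - t) - eA (1 - t)) / (2 * (1 - t)))) t := by
  have h1 := deriv_eE (m := 1 - t) (by linarith) (by linarith)
  have h2 : HasDerivAt (fun t : ℝ => 1 - t) (-1) t := by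
    simpa using (hasDerivAt_id t).const_sub 1
  refine (h1.comp t h2).congr_deriv ?_
  ring

/-- Legendre's relation. -/
lemma legendre {t : ℝ} (h0 : 0 < t) (h : t < 1) :
    eA t * eE (1 - t) + eE t * eA (1 - t) - eA t * eA (1 - t) = π / 2 := by
  set L : ℝ → ℝ := fun t => eA t * eE (1 - t) + eE t * eA (1 - t) - eA t * eA (1 - t) with hL
  have hd : ∀ x ∈ Ioo (0:ℝ) 1, HasDerivAt L 0 x := by
    rintro x ⟨hx0, hx1⟩
    have d := (((deriv_eA hx0 hx1).mul (deriv_eE' hx0 hx1)).add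
      ((deriv_eE hx0 hx1).mul (deriv_eA' hx0 hx1))).sub
      ((deriv_eA hx0 hx1).mul (deriv_eA' hx0 hx1))
    refine d.congr_deriv ?_
    have : 1 - x ≠ 0 := by linarith
    field_simp
    ring
  have hconst : ∀ x ∈ Ioo (0:ℝ) 1, L x = L t := by
    intro x hx
    exact isOpen_Ioo.is_const_of_deriv_eq_zero isPreconnected_Ioo
      (fun y hy => (hd y hy).differentiableAt.differentiableWithinAt)
      (fun y hy => (hd y hy).deriv) hx ⟨h0, h⟩
  have hev : ∀ᶠ x in nhdsWithin (0:ℝ) (Ioi 0), x ∈ Ioo (0:ℝ) 1 := Ioo_mem_nhdsGT one_pos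
  have hU : Tendsto (fun x : ℝ => π / 2 * (√(1 - x))⁻¹ * (1 + √x * (π / 2)))
      (nhdsWithin 0 (Ioi 0)) (nhds (π / 2)) := by
    have : ContinuousAt (fun x : ℝ => π / 2 * (√(1 - x))⁻¹ * (1 + √x * (π / 2))) 0 := by
      have : √(1 - (0:ℝ)) ≠ 0 := by simp
      fun_prop (disch := assumption)
    have h2 := this.tendsto
    simp at h2
    exact h2.mono_left nhdsWithin_le_nhds
  have hV : Tendsto (fun x : ℝ => π / 2 - √x * (π / 2 * (√(1 - x))⁻¹) * (π / 2))
      (nhdsWithin 0 (Ioi 0)) (nhds (π / 2)) := by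
    have : ContinuousAt (fun x : ℝ => π / 2 - √x * (π / 2 * (√(1 - x))⁻¹) * (π / 2)) 0 := by
      have : √(1 - (0:ℝ)) ≠ 0 := by simp
      fun_prop (disch := assumption)
    have h2 := this.tendsto
    simp at h2
    exact h2.mono_left nhdsWithin_le_nhds
  change L t = π / 2
  apply le_antisymm
  · refine ge_of_tendsto hU ?_
    filter_upwards [hev] with x hx
    rw [← hconst x hx]
    have a1 := eA_le hx.1.le hx.2
    have a2 := (eE_near hx.1.le hx.2)
    have a3 := (eE_eA hx.1.le hx.2).2
    have a4 := eA_pos hx.1.le hx.2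
    have a5 := eA_pos (m := 1 - x) (by linarith [hx.2]) (by linarith [hx.1])
    have : L x ≤ eA x * eE (1 - x) := by
      simp only [hL]; nlinarith
    refine this.trans ?_
    have := a2.1
    exact mul_le_mul a1 a2.2 (by linarith) (by positivity)
  · refine le_of_tendsto hV ?_
    filter_upwards [hev] with x hx
    rw [← hconst x hx]
    have a0 := eA_ge hx.1.le hx.2
    have a1 := eA_le hx.1.le hx.2
    have a2 := (eE_near hx.1.le hx.2).1
    have a3 := (eE_eA hx.1.le hx.2).1
    have a4 := eA_pos hx.1.le hx.2
    have a5 := eA_pos (m := 1 - x) (by linarith [hx.2]) (by linarith [hx.1])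
    have a6 := eA_le (m := 1 - x) (by linarith [hx.2]) (by linarith [hx.1])
    rw [sub_sub_cancel] at a6
    have hx0 := hx.1
    have b1 : (eA x - eE x) * eA (1 - x) ≤ (x * (π / 2 * (√(1 - x))⁻¹)) * (π / 2 * (√x)⁻¹) := by
      have : eA x - eE x ≤ x * (π / 2 * (√(1 - x))⁻¹) := by nlinarith
      exact mul_le_mul this a6 a5.le (by positivity)
    have b2 : (x * (π / 2 * (√(1 - x))⁻¹)) * (π / 2 * (√x)⁻¹) =
        √x * (π / 2 * (√(1 - x))⁻¹) * (π / 2) := by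
      have h1 : √x ≠ 0 := (sqrt_pos.2 hx0).ne'
      have h2 : x = √x * √x := (mul_self_sqrt hx0.le).symm
      have h3 : x * (√x)⁻¹ = √x := by nth_rewrite 1 [h2]; field_simp
      calc _ = (x * (√x)⁻¹) * (π / 2 * (√(1 - x))⁻¹) * (π / 2) := by ring
        _ = _ := by rw [h3]
    have b3 : eA x ≤ eA x * eE (1 - x) := by nlinarith
    simp only [hL]
    nlinarith

lemma key_ineq {t : ℝ} (h0 : 0 < t) (h : t < 1) :
    (π / 2) ^ 2 < eA t * ((2 - t) * eA t - eE t) := by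
  have hb : ∀ θ : ℝ, 0 < 1 - t * cos θ ^ 2 := by
    intro θ
    nlinarith [sin_sq_add_cos_sq θ, sq_nonneg (sin θ), sq_nonneg (cos θ)]
  have hvpos : ∀ θ : ℝ, 0 < √(1 - t * cos θ ^ 2) := fun θ => sqrt_pos.2 (hb θ)
  have cv : Continuous fun θ : ℝ => √(1 - t * cos θ ^ 2) := by fun_prop
  have cw := cont_winv h
  have cvi : Continuous fun θ : ℝ => (√(1 - t * cos θ ^ 2))⁻¹ := cv.inv₀ fun θ => (hvpos θ).ne'
  have ca := eA_pos h0.le h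
  set J := ∫ θ in (0:ℝ)..(π / 2), √(1 - t * cos θ ^ 2) * (√(1 - t * sin θ ^ 2))⁻¹ with hJ
  have hJ2 : J = ∫ θ in (0:ℝ)..(π / 2), √(1 - t * sin θ ^ 2) * (√(1 - t * cos θ ^ 2))⁻¹ := by
    have := intervalIntegral.integral_comp_sub_left (a := 0) (b := π / 2)
      (fun θ => √(1 - t * cos θ ^ 2) * (√(1 - t * sin θ ^ 2))⁻¹) (π / 2)
    simp only [cos_pi_div_two_sub, sin_pi_div_two_sub, sub_self, sub_zero] at this
    rw [hJ, this]
  have hJgt : π / 2 < J := by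
    have h2J : 2 * J = ∫ θ in (0:ℝ)..(π / 2), (√(1 - t * cos θ ^ 2) * (√(1 - t * sin θ ^ 2))⁻¹
       + √(1 - t * sin θ ^ 2) * (√(1 - t * cos θ ^ 2))⁻¹) := by
      have k1 : Continuous fun θ : ℝ => √(1 - t * cos θ ^ 2) * (√(1 - t * sin θ ^ 2))⁻¹ :=
        cv.mul cw
      have k2 : Continuous fun θ : ℝ => √(1 - t * sin θ ^ 2) * (√(1 - t * cos θ ^ 2))⁻¹ :=
        (cont_w t).mul cvi
      rw [intervalIntegral.integral_add (k1.intervalIntegrable _ _)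
        (k2.intervalIntegrable _ _), ← hJ, ← hJ2]; ring
    have : ∫ θ in (0:ℝ)..(π / 2), (2:ℝ) < 2 * J := by
      rw [h2J]
      refine intervalIntegral.integral_lt_integral_of_continuousOn_of_le_of_exists_lt
        (by positivity) continuousOn_const
        ((cv.mul cw).add ((cont_w t).mul cvi)).continuousOn ?_ ?_
      · intro θ _
        have h1 := w_pos h θ
        have h2 := hvpos θ
        generalize √(1 - t * cos θ ^ 2) = v at *
        generalize √(1 - t * sin θ ^ 2) = w at *
        have : v * w⁻¹ + w * v⁻¹ - 2 = (v - w) ^ 2 / (v * w) := by field_simp; ring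
        have : 0 ≤ (v - w) ^ 2 / (v * w) := by positivity
        linarith
      · refine ⟨0, ⟨le_rfl, by positivity⟩, ?_⟩
        have h2 := hvpos 0
        have h3 : √(1 - t * cos 0 ^ 2) < 1 := by
          rw [sqrt_lt' one_pos]; simp; linarith
        simp only [sin_zero]
        generalize √(1 - t * cos 0 ^ 2) = v at *
        have : v + v⁻¹ - 2 = (1 - v) ^ 2 / v := by field_simp; ring
        have : 0 < (1 - v) ^ 2 / v := by
          have : 0 < 1 - v := by linarith
          positivity
        simp
        linarith
    simp at this
    linarith
  have hN : (2 - t) * eA t - eE t =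
      ∫ θ in (0:ℝ)..(π / 2), (1 - t * cos θ ^ 2) * (√(1 - t * sin θ ^ 2))⁻¹ := by
    unfold eA eE
    rw [← intervalIntegral.integral_const_mul, ← intervalIntegral.integral_sub
      ((cw.const_mul _).intervalIntegrable _ _) ((cont_w t).intervalIntegrable _ _)]
    congr 1
    ext θ
    have hw := (w_pos h θ).ne'
    have hs := sq_sqrt (D_pos h θ).le
    generalize √(1 - t * sin θ ^ 2) = w at *
    field_simp
    rw [hs, cos_sq']; ring
  have hCS : ∀ k : ℝ, 2 * k * J ≤ ((2 - t) * eA t - eE t) + k ^ 2 * eA t := by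
    intro k
    have cb : Continuous fun θ => (1 - t * cos θ ^ 2) * (√(1 - t * sin θ ^ 2))⁻¹ :=
      Continuous.mul (by fun_prop) cw
    rw [hN, eA, hJ, ← intervalIntegral.integral_const_mul, ← intervalIntegral.integral_const_mul,
      ← intervalIntegral.integral_add (cb.intervalIntegrable _ _)
        ((cw.const_mul _).intervalIntegrable _ _)]
    refine intervalIntegral.integral_mono_on (by positivity) 
      (((cv.mul cw).const_mul _).intervalIntegrable _ _)
      ((cb.add (cw.const_mul _)).intervalIntegrable _ _) fun θ _ => ?_
    have h1 := w_pos h θ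
    have h2 := sq_sqrt (hb θ).le
    generalize √(1 - t * cos θ ^ 2) = v at *
    generalize √(1 - t * sin θ ^ 2) = w at *
    have : 0 ≤ (v - k) ^ 2 * w⁻¹ := by positivity
    rw [← h2]
    nlinarith
  have h3 := hCS (J / eA t)
  have h4 : J ^ 2 ≤ eA t * ((2 - t) * eA t - eE t) := by
    have e1 : 2 * (J / eA t) * J = 2 * (J ^ 2 / eA t) := by ring
    have e2 : (J / eA t) ^ 2 * eA t = J ^ 2 / eA t := by field_simp
    rw [e1, e2] at h3
    have : J ^ 2 / eA t ≤ (2 - t) * eA t - eE t := by linarith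
    rw [div_le_iff₀ ca] at this
    linarith
  have := pi_pos
  nlinarith

lemma log_bound {s : ℝ} (h0 : 0 < s) (h : s < 1) :
    log (4 / s) - s * (π / 2) ≤ eA (1 - s ^ 2) := by
  have hs2 : 1 - s ^ 2 < 1 := by nlinarith
  have d1 : ∀ θ ∈ uIcc 0 (π / 2), HasDerivAt (fun θ => -arsinh (cos θ / s) + log (1 + sin θ) - s * θ)
      ((√(1 + (cos θ / s) ^ 2))⁻¹ * (sin θ / s) + cos θ / (1 + sin θ) - s) θ := by
    intro θ hθ
    rw [uIcc_of_le (by positivity)] at hθ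
    have hsin : 0 ≤ sin θ := sin_nonneg_of_mem_Icc ⟨hθ.1, by linarith [hθ.2, pi_pos]⟩
    have a1 := (((hasDerivAt_cos θ).div_const s).arsinh).neg
    have a2 := ((hasDerivAt_sin θ).const_add 1).log (by positivity)
    have a3 := (hasDerivAt_id θ).const_mul s
    refine ((a1.add a2).sub a3).congr_deriv ?_
    simp only [smul_eq_mul]
    ring
  have hI : IntervalIntegrable (fun θ => (√(1 + (cos θ / s) ^ 2))⁻¹ * (sin θ / s) + cos θ / (1 + sin θ) - s) MeasureTheory.volume 0 (π / 2) := by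
    apply ContinuousOn.intervalIntegrable
    rw [uIcc_of_le (by positivity)]
    refine ContinuousOn.sub (ContinuousOn.add (ContinuousOn.mul (ContinuousOn.inv₀ ?_ ?_) ?_) (ContinuousOn.div ?_ ?_ ?_)) ?_
    · fun_prop
    · intro θ _
      have : 0 < √(1 + (cos θ / s) ^ 2) := sqrt_pos.2 (by positivity)
      exact this.ne'
    · fun_prop
    · fun_prop
    · fun_prop
    · intro θ hθ
      have hsin : 0 ≤ sin θ := sin_nonneg_of_mem_Icc ⟨hθ.1, by linarith [hθ.2, pi_pos]⟩
      positivity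
    · fun_prop
  have hi := intervalIntegral.integral_eq_sub_of_hasDerivAt d1 hI
  have hle : log (4 / s) - s * (π / 2) ≤ ∫ θ in (0:ℝ)..(π / 2), ((√(1 + (cos θ / s) ^ 2))⁻¹ * (sin θ / s) + cos θ / (1 + sin θ) - s) := by
    rw [hi]
    simp only [cos_pi_div_two, sin_pi_div_two, zero_div, arsinh_zero, cos_zero, sin_zero]
    have : log (2 / s) ≤ arsinh (1 / s) := by
      unfold arsinh
      apply log_le_log (by positivity)
      have : 1 / s ≤ √(1 + (1 / s) ^ 2) := by
        apply le_sqrt_of_sq_le; linarith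
      have e : 2 / s = 1 / s + 1 / s := by ring
      linarith
    have e : log (4 / s) = log 2 + log (2 / s) := by
      rw [← log_mul (by norm_num) (by positivity)]; congr 1; ring
    have e1 : log (1 + 1) = log 2 := by norm_num
    have e2 : log (1 + 0) = 0 := by norm_num
    rw [e, e1, e2]
    linarith
  refine hle.trans ?_
  refine intervalIntegral.integral_mono_on (by positivity) hI 
      ((cont_winv hs2).intervalIntegrable _ _) fun θ hθ => ?_
  have hsin : 0 ≤ sin θ := sin_nonneg_of_mem_Icc ⟨hθ.1, by linarith [hθ.2, pi_pos]⟩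
  have hcos : 0 ≤ cos θ := cos_nonneg_of_mem_Icc ⟨by linarith [hθ.1, pi_pos], hθ.2⟩
  have hsin1 := sin_le_one θ
  have hsc := sin_sq_add_cos_sq θ
  have hV : s * √(1 + (cos θ / s) ^ 2) = √(s ^ 2 + cos θ ^ 2) := by
    rw [← sqrt_sq h0.le, ← sqrt_mul (by positivity), sqrt_sq h0.le]
    congr 1; field_simp
  have hVp : 0 < √(s ^ 2 + cos θ ^ 2) := sqrt_pos.2 (by positivity)
  have e1 : (√(1 + (cos θ / s) ^ 2))⁻¹ * (sin θ / s) = sin θ * (√(s ^ 2 + cos θ ^ 2))⁻¹ := by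
    rw [← hV, mul_inv]; ring
  have b1 : (√(s ^ 2 + cos θ ^ 2))⁻¹ ≤ (√(1 - (1 - s ^ 2) * sin θ ^ 2))⁻¹ := by
    have := w_pos hs2 θ
    gcongr
    nlinarith [sin_sq_le θ, sq_nonneg s]
  have b2 : (cos θ + s)⁻¹ ≤ (√(s ^ 2 + cos θ ^ 2))⁻¹ := by
    gcongr
    rw [sqrt_le_left (by positivity)]
    nlinarith [mul_nonneg hcos h0.le]
  have b3 : cos θ / (1 + sin θ) - s ≤ (1 - sin θ) * (cos θ + s)⁻¹ := by
    rw [sub_le_iff_le_add, div_le_iff₀ (by positivity)]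
    have hp : 0 < cos θ + s := by positivity
    have : ((1 - sin θ) * (cos θ + s)⁻¹ + s) * (1 + sin θ) =
      ((1 - sin θ ^ 2) + s * (1 + sin θ) * (cos θ + s)) * (cos θ + s)⁻¹ := by field_simp; ring
    rw [this, ← div_eq_mul_inv, le_div_iff₀ hp]
    have : 0 ≤ s * sin θ * cos θ := by positivity
    have : 0 ≤ s ^ 2 * (1 + sin θ) := by positivity
    nlinarith
  have b4 := mul_le_mul_of_nonneg_left b2 (by linarith : 0 ≤ 1 - sin θ)
  rw [e1]
  linarith

/-- The quotient K as a function of the complementary parameter. -/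
noncomputable def Kf (t : ℝ) : ℝ := eA (1 - t) / eA t

/-- The auxiliary monotone function. -/
noncomputable def Gf (t : ℝ) : ℝ := (2 / π * eA t) ^ 2 * ((1 - t) / t) * exp (-(π * Kf t))

lemma Kf_deriv {t : ℝ} (h0 : 0 < t) (h : t < 1) :
    HasDerivAt Kf (-(π / (4 * t * (1 - t) * eA t ^ 2))) t := by
  have ca := (eA_pos h0.le h).ne'
  refine ((deriv_eA' h0 h).div (deriv_eA h0 h) ca).congr_deriv ?_
  have : 1 - t ≠ 0 := by linarith
  have l := legendre h0 h
  have e : π = 2 * (eA t * eE (1 - t) + eE t * eA (1 - t) - eA t * eA (1 - t)) := by linarith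
  rw [e]
  field_simp
  ring

lemma Gf_deriv {t : ℝ} (h0 : 0 < t) (h : t < 1) :
    HasDerivAt Gf (Gf t * (((π / 2) ^ 2 - eA t * ((2 - t) * eA t - eE t)) /
      (eA t ^ 2 * t * (1 - t)))) t := by
  have ca := (eA_pos h0.le h).ne'
  have h1t : 1 - t ≠ 0 := by linarith
  have d1 := ((deriv_eA h0 h).const_mul (2 / π)).pow 2
  have d2 := (((hasDerivAt_id t).const_sub 1).div (hasDerivAt_id t) h0.ne')
  have d3 := (((Kf_deriv h0 h).const_mul π).neg).exp
  refine ((d1.mul d2).mul d3).congr_deriv ?_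
  simp only [Gf, id, Pi.pow_apply, Pi.mul_apply, Pi.div_apply, Pi.neg_apply,
    show 2 - 1 = 1 from rfl, pow_one, Nat.cast_ofNat]
  generalize exp (-(π * Kf t)) = X
  field_simp
  ring

lemma Gf_pos {t : ℝ} (h0 : 0 < t) (h : t < 1) : 0 < Gf t := by
  have ca := (eA_pos h0.le h)
  have h1t : 0 < 1 - t := by linarith
  unfold Gf
  positivity

lemma Gf_anti : StrictAntiOn Gf (Ioo 0 1) := by
  apply strictAntiOn_of_deriv_neg (convex_Ioo 0 1)
  · exact fun x hx => (Gf_deriv hx.1 hx.2).continuousAt.continuousWithinAt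
  · intro x hx
    rw [interior_Ioo] at hx
    rw [(Gf_deriv hx.1 hx.2).deriv]
    have ca := (eA_pos hx.1.le hx.2)
    have h1t : 0 < 1 - x := by linarith [hx.2]
    have h0 := hx.1
    apply mul_neg_of_pos_of_neg (Gf_pos hx.1 hx.2)
    apply div_neg_of_neg_of_pos
    · linarith [key_ineq hx.1 hx.2]
    · positivity

lemma Kf_lower {t : ℝ} (h0 : 0 < t) (h : t < 1) : log (16 / t) - 12 * √t ≤ π * Kf t := by
  have ca := eA_pos h0.le h
  have cb := eA_pos (m := 1 - t) (by linarith) (by linarith)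
  have hs0 : 0 < √t := sqrt_pos.2 h0
  have hs1 : √t < 1 := by rw [sqrt_lt' one_pos]; linarith
  have hst := sq_sqrt h0.le
  have l := log_bound hs0 hs1
  rw [hst] at l
  have h1t : 0 < 1 - t := by linarith
  have hA := eA_le h0.le h
  have hq : 1 - t ≤ √(1 - t) := by apply le_sqrt_of_sq_le; nlinarith
  have h1 : 2 * (1 - t) * eA (1 - t) ≤ π * Kf t := by
    unfold Kf
    rw [← mul_div_assoc, le_div_iff₀ ca]
    have : (1 - t) * eA t ≤ π / 2 := by
      calc (1 - t) * eA t ≤ √(1 - t) * (π / 2 * (√(1 - t))⁻¹) := by gcongr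
        _ = π / 2 := by have := (sqrt_pos.2 h1t).ne'; field_simp
    nlinarith
  have hlog : log (16 / t) = 2 * log (4 / √t) := by
    have : 16 / t = (4 / √t) ^ 2 := by rw [div_pow, hst]; norm_num
    rw [this, log_pow]; norm_num
  have hl : t * log (4 / √t) ≤ 4 * √t := by
    have := log_le_sub_one_of_pos (show 0 < 4 / √t by positivity)
    have h2 : t * (4 / √t) = 4 * √t := by
      nth_rewrite 1 [← hst]; field_simp
    nlinarith
  have h2 := mul_le_mul_of_nonneg_left l (show 0 ≤ 2 * (1 - t) by linarith)
  have h3 : (1 - t) * (√t * π) ≤ √t * 4 := by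
    have : √t * π ≤ √t * 4 := by gcongr; exact pi_le_four
    nlinarith [mul_pos hs0 pi_pos]
  rw [hlog]
  nlinarith

lemma Gf_le {t : ℝ} (h0 : 0 < t) (h : t < 1) : Gf t ≤ 1 / 16 * exp (12 * √t) := by
  have ca := eA_pos h0.le h
  have h1t : 0 < 1 - t := by linarith
  have hA := eA_le h0.le h
  have hk := Kf_lower h0 h
  have e1 : exp (-(π * Kf t)) ≤ t / 16 * exp (12 * √t) := by
    have : t / 16 = exp (-log (16 / t)) := by
      rw [exp_neg, exp_log (by positivity), inv_div]
    rw [this, ← exp_add]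
    apply exp_le_exp.2
    linarith
  have e2 : (2 / π * eA t) ^ 2 ≤ (1 - t)⁻¹ := by
    have : 2 / π * eA t ≤ (√(1 - t))⁻¹ := by
      calc _ ≤ 2 / π * (π / 2 * (√(1 - t))⁻¹) := by gcongr
        _ = _ := by field_simp
    calc _ ≤ ((√(1 - t))⁻¹) ^ 2 := by gcongr
      _ = _ := by rw [inv_pow, sq_sqrt h1t.le]
  unfold Gf
  calc _ ≤ (1 - t)⁻¹ * ((1 - t) / t) * (t / 16 * exp (12 * √t)) := by gcongr
    _ = _ := by field_simp

lemma Gf_lt {t : ℝ} (h0 : 0 < t) (h : t < 1) : Gf t < 1 / 16 := by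
  have h1 : Gf t < Gf (t / 2) := Gf_anti ⟨by linarith, by linarith⟩ ⟨h0, h⟩ (by linarith)
  refine h1.trans_le ?_
  have hU : Tendsto (fun x : ℝ => 1 / 16 * exp (12 * √x))
      (nhdsWithin 0 (Ioi 0)) (nhds (1 / 16)) := by
    have : ContinuousAt (fun x : ℝ => 1 / 16 * exp (12 * √x)) 0 := by fun_prop
    have h2 := this.tendsto
    simp only [sqrt_zero, mul_zero, exp_zero, mul_one] at h2
    exact h2.mono_left nhdsWithin_le_nhds
  refine ge_of_tendsto hU ?_
  have hev : ∀ᶠ x in nhdsWithin (0:ℝ) (Ioi 0), x ∈ Ioo (0:ℝ) (t / 2) :=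
    Ioo_mem_nhdsGT (by linarith)
  filter_upwards [hev] with x hx
  have : Gf (t / 2) < Gf x := Gf_anti ⟨hx.1, by linarith [hx.2]⟩ ⟨by linarith, by linarith⟩ hx.2
  exact this.le.trans (Gf_le hx.1 (by linarith [hx.2]))

lemma Kf_half : Kf (1 / 2) = 1 := by
  unfold Kf
  have : (1:ℝ) - 1 / 2 = 1 / 2 := by norm_num
  rw [this]
  exact div_self (eA_pos (by norm_num) (by norm_num)).ne'

lemma Phi_deriv (c : ℝ) {t : ℝ} (h0 : 0 < t) (h : t < 1) :
    HasDerivAt (fun t => (1 - t) / t - c * exp (π * Kf t))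
      (π ^ 2 * exp (π * Kf t) / (4 * t * (1 - t) * eA t ^ 2) * (c - Gf t)) t := by
  have ca := (eA_pos h0.le h).ne'
  have h1t : 1 - t ≠ 0 := by linarith
  have d2 := (((hasDerivAt_id t).const_sub 1).div (hasDerivAt_id t) h0.ne')
  have d3 := ((((Kf_deriv h0 h).const_mul π)).exp).const_mul c
  refine (d2.sub d3).congr_deriv ?_
  simp only [Gf, id, exp_neg]
  have := exp_ne_zero (π * Kf t)
  generalize exp (π * Kf t) = X at *
  field_simp
  ring

lemma coef_pos {t : ℝ} (h0 : 0 < t) (h : t < 1) :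
    0 < π ^ 2 * exp (π * Kf t) / (4 * t * (1 - t) * eA t ^ 2) := by
  have ca := (eA_pos h0.le h)
  have h1t : 0 < 1 - t := by linarith
  positivity

lemma lower {t : ℝ} (h0 : 0 < t) (h : t < 1 / 2) :
    1 + Gf (1 / 2) * (exp (π * Kf t) - exp π) < (1 - t) / t := by
  have : StrictAntiOn (fun t => (1 - t) / t - Gf (1 / 2) * exp (π * Kf t)) (Ioc 0 (1 / 2)) := by
    apply strictAntiOn_of_deriv_neg (convex_Ioc _ _)
    · exact fun x hx => (Phi_deriv _ hx.1 (by linarith [hx.2])).continuousAt.continuousWithinAt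
    · intro x hx
      rw [interior_Ioc] at hx
      have hx1 : x < 1 := by linarith [hx.2]
      rw [(Phi_deriv _ hx.1 hx1).deriv]
      apply mul_neg_of_pos_of_neg (coef_pos hx.1 hx1)
      have := Gf_anti ⟨hx.1, hx1⟩ ⟨by norm_num, by norm_num⟩ hx.2
      linarith
  have := this ⟨h0, h.le⟩ ⟨by norm_num, le_rfl⟩ h
  simp only [Kf_half, mul_one] at this
  norm_num at this ⊢
  linarith

lemma upper {t : ℝ} (h0 : 0 < t) (h : t < 1 / 2) :
    (1 - t) / t < 1 + 1 / 16 * (exp (π * Kf t) - exp π) := by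
  have : StrictMonoOn (fun t => (1 - t) / t - 1 / 16 * exp (π * Kf t)) (Ioc 0 (1 / 2)) := by
    apply strictMonoOn_of_deriv_pos (convex_Ioc _ _)
    · exact fun x hx => (Phi_deriv _ hx.1 (by linarith [hx.2])).continuousAt.continuousWithinAt
    · intro x hx
      rw [interior_Ioc] at hx
      have hx1 : x < 1 := by linarith [hx.2]
      rw [(Phi_deriv _ hx.1 hx1).deriv]
      apply mul_pos (coef_pos hx.1 hx1)
      have := Gf_lt hx.1 hx1
      linarith
  have := this ⟨h0, h.le⟩ ⟨by norm_num, le_rfl⟩ h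
  simp only [Kf_half, mul_one] at this
  norm_num at this ⊢
  linarith

lemma exists_t {K : ℝ} (hK : 1 < K) : ∃ t, 0 < t ∧ t < 1 / 2 ∧ Kf t = K := by
  set t₀ := exp (-(π * K + 12)) with ht₀
  have h0 : 0 < t₀ := exp_pos _
  have hpk : 0 < π * K := by positivity
  have h1 : t₀ < 1 / 2 := by
    rw [ht₀, exp_neg, one_div]
    apply inv_strictAnti₀ (by norm_num)
    have := add_one_le_exp (π * K + 12)
    linarith
  have hlow := Kf_lower h0 (by linarith)
  have hK0 : K ≤ Kf t₀ := by
    have hl : log (16 / t₀) = log 16 + (π * K + 12) := by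
      rw [log_div (by norm_num) h0.ne', ht₀, log_exp]; ring
    have hl16 : 0 < log 16 := log_pos (by norm_num)
    have hs1 : √t₀ < 1 := by rw [sqrt_lt' one_pos]; linarith
    have : π * K ≤ π * Kf t₀ := by linarith
    exact le_of_mul_le_mul_left this pi_pos
  have hc : ContinuousOn Kf (Icc t₀ (1 / 2)) := fun x hx =>
    (Kf_deriv (by linarith [hx.1]) (by linarith [hx.2])).continuousAt.continuousWithinAt
  obtain ⟨t, ht, hKt⟩ := intermediate_value_Icc' h1.le hc ⟨by rw [Kf_half]; exact hK.le, hK0⟩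
  refine ⟨t, by linarith [ht.1], lt_of_le_of_ne ht.2 ?_, hKt⟩
  rintro rfl
  rw [Kf_half] at hKt
  linarith

end EllAux

theorem stmt_13 (lam : ℝ → ℝ)
    (hlam : ∀ K : ℝ, 0 < K → ∀ r ∈ Set.Ioo (0:ℝ) 1,
      mu r = Real.pi / (2 * K) → lam K = r ^ 2 / (1 - r ^ 2)) (c : ℝ)
    (hc : c = (2 / Real.pi * ellK (1 / Real.sqrt 2)) ^ 2 * Real.exp (-Real.pi)) :
    ∀ K : ℝ, 1 < K →
      1 + c * (Real.exp (Real.pi * K) - Real.exp Real.pi) < lam K ∧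
      lam K < 1 + 1 / 16 * (Real.exp (Real.pi * K) - Real.exp Real.pi) := by
  intro K hK
  obtain ⟨t, h0, h1, hKt⟩ := EllAux.exists_t hK
  have h1t : 0 < 1 - t := by linarith
  have hs : Real.sqrt (1 - t) ^ 2 = 1 - t := Real.sq_sqrt h1t.le
  have hst : Real.sqrt t ^ 2 = t := Real.sq_sqrt h0.le
  have hl : lam K = (1 - t) / t := by
    rw [hlam K (by linarith) (Real.sqrt (1 - t)) ⟨Real.sqrt_pos.2 h1t, ?_⟩ ?_, hs, sub_sub_cancel]
    · rw [Real.sqrt_lt' one_pos]; linarith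
    · unfold mu
      rw [hs, sub_sub_cancel, EllAux.ellK_eq (by rw [hst]; linarith),
        EllAux.ellK_eq (by rw [hs]; linarith), hs, hst, ← hKt, EllAux.Kf]
      have a1 := (EllAux.eA_pos h0.le (by linarith)).ne'
      have a2 := (EllAux.eA_pos (m := 1 - t) h1t.le (by linarith)).ne'
      field_simp
  have hcG : c = EllAux.Gf (1 / 2) := by
    have e : (1 / Real.sqrt 2) ^ 2 = 1 / 2 := by
      rw [div_pow, Real.sq_sqrt (by norm_num)]; norm_num
    rw [hc, EllAux.Gf, EllAux.Kf_half, EllAux.ellK_eq (by rw [e]; norm_num), e]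
    norm_num
  have hlo := EllAux.lower h0 h1
  have hup := EllAux.upper h0 h1
  rw [hKt, ← hcG] at hlo
  rw [hKt] at hup
  rw [hl]
  exact ⟨hlo, hup⟩
end

section
/- Let K > 1 and let w ∈ (0,1) be the unique solution of μ(w) = (1/(2K))·log 2. For every t ≥ 1/w² − 1, writing r' = 1/√(1+t), one has η_K(t) > (1/16)·exp(2K·μ(r')) − 1/2 + c₁(t,K)·exp(−2K·μ(r')), where c₁(t,K) = 1/4 + 1/(4·exp(−4K·μ(r')) + 1); moreover c₁(t,K) > 9/20. -/
open Set Filter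

open MeasureTheory

/-- Auxiliary integral over the half line. -/
noncomputable def HH (a b : ℝ) : ℝ :=
  ∫ x in Ioi (0:ℝ), 1 / Real.sqrt ((x ^ 2 + a ^ 2) * (x ^ 2 + b ^ 2))

lemma HH_scale (a b c : ℝ) (hc : 0 < c) : HH (c * a) (c * b) = HH a b / c := by
  unfold HH
  have h := integral_comp_mul_left_Ioi
    (fun x : ℝ => 1 / Real.sqrt ((x ^ 2 + (c * a) ^ 2) * (x ^ 2 + (c * b) ^ 2))) 0 hc
  simp only [mul_zero, smul_eq_mul] at h
  have h2 : ∀ x : ℝ, 1 / Real.sqrt (((c * x) ^ 2 + (c * a) ^ 2) * ((c * x) ^ 2 + (c * b) ^ 2))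
      = (c ^ 2)⁻¹ * (1 / Real.sqrt ((x ^ 2 + a ^ 2) * (x ^ 2 + b ^ 2))) := by
    intro x
    have : ((c * x) ^ 2 + (c * a) ^ 2) * ((c * x) ^ 2 + (c * b) ^ 2)
        = (c ^ 2) ^ 2 * ((x ^ 2 + a ^ 2) * (x ^ 2 + b ^ 2)) := by ring
    rw [this, Real.sqrt_mul (by positivity), Real.sqrt_sq (by positivity)]
    rw [one_div, one_div, mul_inv]
  simp only [h2] at h
  rw [integral_const_mul] at h
  rw [eq_div_iff hc.ne']
  have hc' := hc.ne'
  generalize (∫ x in Ioi (0:ℝ), 1 / Real.sqrt ((x ^ 2 + (c * a) ^ 2) * (x ^ 2 + (c * b) ^ 2))) = A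
    at h ⊢
  generalize (∫ x in Ioi (0:ℝ), 1 / Real.sqrt ((x ^ 2 + a ^ 2) * (x ^ 2 + b ^ 2))) = B at h ⊢
  field_simp at h
  linarith

lemma HH_agm (a b : ℝ) (ha : 0 < a) (hb : 0 < b) :
    HH ((a + b) / 2) (Real.sqrt (a * b)) = HH a b := by
  have hab : 0 < a * b := mul_pos ha hb
  set g : ℝ → ℝ := fun x =>
    1 / Real.sqrt ((x ^ 2 + ((a + b) / 2) ^ 2) * (x ^ 2 + (Real.sqrt (a * b)) ^ 2)) with hg
  have h1 : ∫ x, g x = 2 * HH ((a + b) / 2) (Real.sqrt (a * b)) := by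
    have := integral_comp_abs (f := g)
    rw [HH, ← this]
    congr 1
    ext x
    simp [hg, sq_abs]
  set f : ℝ → ℝ := fun x => (x - a * b / x) / 2 with hf
  have hder : ∀ x ∈ Ioi (0:ℝ), HasDerivWithinAt f ((1 + a * b / x ^ 2) / 2) (Ioi 0) x := by
    intro x hx
    have hx' : x ≠ 0 := ne_of_gt hx
    have h := ((hasDerivAt_id x).sub ((hasDerivAt_inv hx').const_mul (a * b))).div_const 2
    refine HasDerivAt.hasDerivWithinAt ?_
    have hfe : f = (fun x => ((id : ℝ → ℝ) - fun y : ℝ => a * b * y⁻¹) x / 2) := by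
      funext y
      simp [hf, div_eq_mul_inv]
    rw [hfe]
    refine h.congr_deriv ?_
    ring
  have hinj : InjOn f (Ioi 0) := by
    intro x hx y hy hxy
    have hx0 : 0 < x := hx
    have hy0 : 0 < y := hy
    simp only [hf] at hxy
    have h2 : (x - y) * (x * y + a * b) = 0 := by
      field_simp at hxy
      linarith
    rcases mul_eq_zero.1 h2 with h | h
    · linarith
    · have := mul_pos hx0 hy0
      linarith
  have himg : f '' Ioi 0 = univ := by
    refine eq_univ_of_forall fun y => ?_
    have hs : |y| < Real.sqrt (y ^ 2 + a * b) := by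
      rw [← Real.sqrt_sq_eq_abs]
      exact Real.sqrt_lt_sqrt (sq_nonneg _) (by linarith)
    have hpos : 0 < y + Real.sqrt (y ^ 2 + a * b) := by
      have := neg_abs_le y
      linarith
    refine ⟨y + Real.sqrt (y ^ 2 + a * b), hpos, ?_⟩
    simp only [hf]
    have hsq : Real.sqrt (y ^ 2 + a * b) ^ 2 = y ^ 2 + a * b := Real.sq_sqrt (by positivity)
    rw [div_eq_iff (by norm_num), sub_eq_iff_eq_add, ← sub_eq_iff_eq_add', eq_div_iff hpos.ne']
    nlinarith
  have key := integral_image_eq_integral_abs_deriv_smul measurableSet_Ioi hder hinj g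
  rw [himg, setIntegral_univ, h1] at key
  have h3 : ∫ x in Ioi (0:ℝ), |(1 + a * b / x ^ 2) / 2| • g (f x) = 2 * HH a b := by
    rw [HH, ← integral_const_mul]
    refine setIntegral_congr_fun measurableSet_Ioi ?_
    intro x hx
    have hx0 : 0 < x := hx
    have e1 : (f x ^ 2 + ((a + b) / 2) ^ 2) * (f x ^ 2 + (Real.sqrt (a * b)) ^ 2)
        = ((x ^ 2 + a * b) / (4 * x ^ 2)) ^ 2 * ((x ^ 2 + a ^ 2) * (x ^ 2 + b ^ 2)) := by
      rw [Real.sq_sqrt hab.le]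
      simp only [hf]
      field_simp
      ring
    simp only [hg, smul_eq_mul]
    rw [e1, Real.sqrt_mul (by positivity), Real.sqrt_sq (by positivity), abs_of_pos (by positivity)]
    have : 0 < Real.sqrt ((x ^ 2 + a ^ 2) * (x ^ 2 + b ^ 2)) := by positivity
    field_simp
    ring
  rw [h3] at key
  linarith

lemma ellK_eq_s15 (r b : ℝ) (hb : 0 < b) (h : r ^ 2 = 1 - b ^ 2) : ellK r = HH 1 b := by
  have hpi := Real.pi_pos
  unfold ellK HH
  rw [intervalIntegral.integral_of_le (by positivity), integral_Ioc_eq_integral_Ioo]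
  set f : ℝ → ℝ := fun x => b * Real.tan x with hf
  have hder : ∀ x ∈ Ioo (0:ℝ) (Real.pi / 2),
      HasDerivWithinAt f (b * (1 / Real.cos x ^ 2)) (Ioo (0:ℝ) (Real.pi / 2)) x := by
    intro x hx
    have hc : 0 < Real.cos x := Real.cos_pos_of_mem_Ioo ⟨by linarith [hx.1], hx.2⟩
    exact ((Real.hasDerivAt_tan hc.ne').const_mul b).hasDerivWithinAt
  have hinj : InjOn f (Ioo (0:ℝ) (Real.pi / 2)) := by
    intro x hx y hy hxy
    have : Real.tan x = Real.tan y := mul_left_cancel₀ hb.ne' hxy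
    exact Real.tan_inj_of_lt_of_lt_pi_div_two (by linarith [hx.1]) hx.2 (by linarith [hy.1]) hy.2 this
  have himg : f '' (Ioo (0:ℝ) (Real.pi / 2)) = Ioi 0 := by
    ext y
    constructor
    · rintro ⟨x, hx, rfl⟩
      exact mul_pos hb (Real.tan_pos_of_pos_of_lt_pi_div_two hx.1 hx.2)
    · intro hy
      have hy0 : 0 < y := hy
      refine ⟨Real.arctan (y / b), ⟨Real.arctan_pos.2 (by positivity), Real.arctan_lt_pi_div_two _⟩, ?_⟩
      simp only [hf, Real.tan_arctan]
      field_simp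
  rw [← himg, integral_image_eq_integral_abs_deriv_smul measurableSet_Ioo hder hinj]
  refine setIntegral_congr_fun measurableSet_Ioo ?_
  intro x hx
  have hc : 0 < Real.cos x := Real.cos_pos_of_mem_Ioo ⟨by linarith [hx.1], hx.2⟩
  have hs : Real.sin x ^ 2 = 1 - Real.cos x ^ 2 := Real.sin_sq x
  simp only [hf, smul_eq_mul]
  have hp : 0 < 1 - r ^ 2 * Real.sin x ^ 2 := by
    rw [h]
    have : 1 - (1 - b ^ 2) * Real.sin x ^ 2 = Real.cos x ^ 2 + b ^ 2 * Real.sin x ^ 2 := by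
      rw [hs]; ring
    rw [this]; positivity
  have e1 : ((b * Real.tan x) ^ 2 + 1 ^ 2) * ((b * Real.tan x) ^ 2 + b ^ 2)
      = (b / Real.cos x ^ 2) ^ 2 * (1 - r ^ 2 * Real.sin x ^ 2) := by
    rw [Real.tan_eq_sin_div_cos, h]
    field_simp
    rw [hs]
    ring
  rw [e1, Real.sqrt_mul (by positivity), Real.sqrt_sq (by positivity), abs_of_pos (by positivity),
    Real.rpow_neg hp.le, ← Real.sqrt_eq_rpow]
  have : 0 < Real.sqrt (1 - r ^ 2 * Real.sin x ^ 2) := Real.sqrt_pos.2 hp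
  field_simp

lemma ellK_intervalIntegrable {r : ℝ} (hr : r ^ 2 < 1) : Continuous
    (fun θ : ℝ => (1 - r ^ 2 * Real.sin θ ^ 2) ^ (-(1/2) : ℝ)) := by
  refine Continuous.rpow_const (by fun_prop) ?_
  intro θ
  left
  nlinarith [Real.sin_sq_le_one θ, sq_nonneg (Real.sin θ), sq_nonneg r]

lemma ellK_mono {r s : ℝ} (h : r ^ 2 ≤ s ^ 2) (hs : s ^ 2 < 1) : ellK r ≤ ellK s := by
  unfold ellK
  refine intervalIntegral.integral_mono_on (by positivity)
    (ellK_intervalIntegrable (lt_of_le_of_lt h hs)).continuousOn.intervalIntegrable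
    (ellK_intervalIntegrable hs).continuousOn.intervalIntegrable ?_
  intro θ _
  refine Real.rpow_le_rpow_of_nonpos ?_ ?_ (by norm_num)
  · nlinarith [Real.sin_sq_le_one θ, sq_nonneg (Real.sin θ), sq_nonneg s]
  · nlinarith [sq_nonneg (Real.sin θ)]

lemma ellK_ge {r : ℝ} (hr : r ^ 2 < 1) : Real.pi / 2 ≤ ellK r := by
  have h := ellK_mono (r := 0) (s := r) (by simpa using sq_nonneg r) hr
  simpa [ellK] using h

lemma ellK_pos {r : ℝ} (hr : r ^ 2 < 1) : 0 < ellK r :=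
  lt_of_lt_of_le (by positivity) (ellK_ge hr)

lemma ellK_contOn : ContinuousOn ellK (Ioo (-1) 1) := by
  intro r hr
  obtain ⟨c, hc1, hc2⟩ : ∃ c, |r| < c ∧ c < 1 := exists_between (abs_lt.2 hr)
  have hc0 : 0 ≤ c := (abs_nonneg r).trans hc1.le
  have hcont : Continuous (fun p : ℝ × ℝ =>
      (1 - (min (p.1 ^ 2) (c ^ 2)) * Real.sin p.2 ^ 2) ^ (-(1/2) : ℝ)) := by
    refine Continuous.rpow_const (by fun_prop) ?_
    intro p
    left
    have h1 : min (p.1 ^ 2) (c ^ 2) ≤ c ^ 2 := min_le_right _ _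
    have h2 : c ^ 2 < 1 := by nlinarith
    nlinarith [Real.sin_sq_le_one p.2, sq_nonneg (Real.sin p.2), sq_nonneg c]
  have hG : Continuous (fun r : ℝ => ∫ θ in (0:ℝ)..(Real.pi / 2),
      (1 - (min (r ^ 2) (c ^ 2)) * Real.sin θ ^ 2) ^ (-(1/2) : ℝ)) :=
    intervalIntegral.continuous_parametric_intervalIntegral_of_continuous' hcont _ _
  refine ContinuousAt.continuousWithinAt ?_
  refine hG.continuousAt.congr ?_
  have : ∀ᶠ s in nhds r, |s| < c := (continuous_abs.continuousAt).eventually_lt_const hc1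
  filter_upwards [this] with s hs
  unfold ellK
  have : s ^ 2 ≤ c ^ 2 := by
    rw [← sq_abs]; exact pow_le_pow_left₀ (abs_nonneg _) hs.le 2
  simp only [min_eq_left this]

lemma sqrt_mem {r : ℝ} (hr : r ∈ Ioo (0:ℝ) 1) : Real.sqrt (1 - r ^ 2) ∈ Ioo (0:ℝ) 1 := by
  obtain ⟨h0, h1⟩ := hr
  refine ⟨Real.sqrt_pos.2 (by nlinarith), ?_⟩
  rw [Real.sqrt_lt' one_pos]
  nlinarith

lemma sq_lt_of_mem {r : ℝ} (hr : r ∈ Ioo (0:ℝ) 1) : r ^ 2 < 1 := by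
  obtain ⟨h0, h1⟩ := hr
  nlinarith

lemma mu_pos {r : ℝ} (hr : r ∈ Ioo (0:ℝ) 1) : 0 < mu r := by
  have h1 := ellK_pos (sq_lt_of_mem hr)
  have h2 := ellK_pos (sq_lt_of_mem (sqrt_mem hr))
  have := Real.pi_pos
  unfold mu
  positivity

lemma mu_anti {r s : ℝ} (hr : r ∈ Ioo (0:ℝ) 1) (hs : s ∈ Ioo (0:ℝ) 1) (h : r ≤ s) :
    mu s ≤ mu r := by
  have h1 := ellK_pos (sq_lt_of_mem hr)
  have h2 := ellK_pos (sq_lt_of_mem (sqrt_mem hr))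
  have hsq : r ^ 2 ≤ s ^ 2 := pow_le_pow_left₀ hr.1.le h 2
  have h3 := ellK_mono hsq (sq_lt_of_mem hs)
  have h4 : ellK (Real.sqrt (1 - s ^ 2)) ≤ ellK (Real.sqrt (1 - r ^ 2)) := by
    refine ellK_mono ?_ (sq_lt_of_mem (sqrt_mem hr))
    exact pow_le_pow_left₀ (Real.sqrt_nonneg _) (Real.sqrt_le_sqrt (by linarith)) 2
  have := Real.pi_pos
  unfold mu
  gcongr

lemma mu_contOn : ContinuousOn mu (Ioo 0 1) := by
  unfold mu
  have hsub : Ioo (0:ℝ) 1 ⊆ Ioo (-1) 1 := Ioo_subset_Ioo_left (by norm_num)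
  refine ContinuousOn.div ?_ (ellK_contOn.mono hsub) ?_
  · refine continuousOn_const.mul ?_
    refine ellK_contOn.comp (by fun_prop) ?_
    intro r hr
    exact hsub (sqrt_mem hr)
  · intro r hr
    exact (ellK_pos (sq_lt_of_mem hr)).ne'

lemma mu_landen {p : ℝ} (hp : p ∈ Ioo (0:ℝ) 1) :
    mu ((1 - p) / (1 + p)) = 2 * mu (Real.sqrt (1 - p ^ 2)) := by
  obtain ⟨h0, h1⟩ := hp
  have hq : 0 < 1 - p ^ 2 := by nlinarith
  have hss : Real.sqrt (1 - Real.sqrt (1 - p ^ 2) ^ 2) = p := by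
    rw [Real.sq_sqrt hq.le]
    have : 1 - (1 - p ^ 2) = p ^ 2 := by ring
    rw [this, Real.sqrt_sq h0.le]
  have hsp : 0 < Real.sqrt p := Real.sqrt_pos.2 h0
  have hsp2 : Real.sqrt p ^ 2 = p := Real.sq_sqrt h0.le
  have ht : Real.sqrt (1 - ((1 - p) / (1 + p)) ^ 2) = 2 * Real.sqrt p / (1 + p) := by
    rw [Real.sqrt_eq_iff_mul_self_eq_of_pos (by positivity)]
    field_simp
    nlinarith
  have hsq : Real.sqrt (1 - p ^ 2) ^ 2 = 1 - p ^ 2 := Real.sq_sqrt hq.le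
  have k1 : ellK (Real.sqrt (1 - p ^ 2)) = HH 1 p := ellK_eq_s15 _ p h0 hsq
  have k2 : ellK p = HH 1 (Real.sqrt (1 - p ^ 2)) :=
    ellK_eq_s15 _ _ (Real.sqrt_pos.2 hq) (by rw [hsq]; ring)
  have k3 : ellK ((1 - p) / (1 + p)) = HH 1 (2 * Real.sqrt p / (1 + p)) := by
    refine ellK_eq_s15 _ _ (by positivity) ?_
    field_simp
    nlinarith
  have k4 : ellK (2 * Real.sqrt p / (1 + p)) = HH 1 ((1 - p) / (1 + p)) := by
    refine ellK_eq_s15 _ _ (div_pos (by linarith) (by linarith)) ?_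
    field_simp
    nlinarith
  have a1 : HH 1 p = HH 1 (2 * Real.sqrt p / (1 + p)) / ((1 + p) / 2) := by
    rw [← HH_agm 1 p one_pos h0, ← HH_scale _ _ _ (by positivity)]
    congr 1
    · ring
    · field_simp
  have a2 : HH 1 (Real.sqrt (1 - p ^ 2)) = HH 1 ((1 - p) / (1 + p)) / (1 + p) := by
    rw [← HH_scale _ _ _ (by positivity)]
    have := HH_agm (1 + p) (1 - p) (by linarith) (by linarith)
    rw [show (1 + p + (1 - p)) / 2 = 1 by ring, show (1 + p) * (1 - p) = 1 - p ^ 2 by ring] at this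
    rw [this]
    congr 1
    · ring
    · field_simp
  have hpos : 0 < HH 1 (2 * Real.sqrt p / (1 + p)) := by
    rw [← k3]
    refine ellK_pos ?_
    rw [div_pow, div_lt_one (by positivity)]
    nlinarith
  unfold mu
  rw [hss, ht, k1, k2, k3, k4, a1, a2]
  field_simp

lemma HH_le {r : ℝ} (hr : r ∈ Ioo (0:ℝ) 1) : HH 1 r ≤ 2 - Real.log r := by
  obtain ⟨h0, h1⟩ := hr
  set f : ℝ → ℝ := fun x => 1 / Real.sqrt ((x ^ 2 + 1 ^ 2) * (x ^ 2 + r ^ 2)) with hf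
  have hcont : Continuous f := by
    refine continuous_const.div (by fun_prop) ?_
    intro x
    have : 0 < Real.sqrt ((x ^ 2 + 1 ^ 2) * (x ^ 2 + r ^ 2)) := by positivity
    exact this.ne'
  have hnn : ∀ x, 0 ≤ f x := fun x => by simp only [hf]; positivity
  have b1 : ∀ x, f x ≤ 1 / r := by
    intro x
    refine one_div_le_one_div_of_le h0 (Real.le_sqrt_of_sq_le ?_)
    nlinarith [sq_nonneg x, sq_nonneg r, mul_nonneg (sq_nonneg x) (sq_nonneg r), sq_nonneg (x ^ 2)]
  have b2 : ∀ x, 0 < x → f x ≤ 1 / x := by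
    intro x hx
    refine one_div_le_one_div_of_le hx (Real.le_sqrt_of_sq_le ?_)
    nlinarith [sq_nonneg x, sq_nonneg r, mul_nonneg (sq_nonneg x) (sq_nonneg r), sq_nonneg (x ^ 2)]
  have b3 : ∀ x, 0 < x → f x ≤ x ^ (-2 : ℝ) := by
    intro x hx
    rw [Real.rpow_neg hx.le, ← one_div]
    norm_cast
    refine one_div_le_one_div_of_le (by positivity) (Real.le_sqrt_of_sq_le ?_)
    nlinarith [sq_nonneg x, sq_nonneg r, mul_nonneg (sq_nonneg x) (sq_nonneg r), sq_nonneg (x ^ 2)]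
  have hint3 : IntegrableOn (fun x : ℝ => x ^ (-2 : ℝ)) (Ioi 1) :=
    integrableOn_Ioi_rpow_of_lt (by norm_num) one_pos
  have hf3 : IntegrableOn f (Ioi 1) := by
    refine Integrable.mono' hint3 hcont.aestronglyMeasurable ?_
    refine (ae_restrict_iff' measurableSet_Ioi).2 (Eventually.of_forall fun x hx => ?_)
    rw [Real.norm_of_nonneg (hnn x)]
    exact b3 x (lt_trans one_pos hx)
  have i3 : ∫ x in Ioi (1:ℝ), f x ≤ 1 := by
    have h := setIntegral_mono_on hf3 hint3 measurableSet_Ioi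
      (fun x hx => b3 x (lt_trans one_pos hx))
    rw [integral_Ioi_rpow_of_lt (by norm_num) one_pos] at h
    norm_num at h
    exact h
  have i1 : ∫ x in (0:ℝ)..r, f x ≤ 1 := by
    have h := intervalIntegral.integral_mono_on h0.le (hcont.intervalIntegrable 0 r (μ := volume))
      (intervalIntegrable_const (c := 1 / r)) (fun x _ => b1 x)
    rw [intervalIntegral.integral_const, smul_eq_mul, sub_zero, mul_one_div_cancel h0.ne'] at h
    exact h
  have i2 : ∫ x in r..(1:ℝ), f x ≤ - Real.log r := by
    have h := intervalIntegral.integral_mono_on h1.le (hcont.intervalIntegrable r 1 (μ := volume))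
      (intervalIntegral.intervalIntegrable_one_div (f := fun x => x)
        (fun x hx => by
          rw [uIcc_of_le h1.le] at hx
          exact (lt_of_lt_of_le h0 hx.1).ne') continuousOn_id)
      (fun x hx => b2 x (lt_of_lt_of_le h0 hx.1))
    rw [integral_one_div_of_pos h0 one_pos, one_div, Real.log_inv] at h
    exact h
  have hsplit : HH 1 r = (∫ x in (0:ℝ)..1, f x) + ∫ x in Ioi (1:ℝ), f x := by
    rw [intervalIntegral.integral_of_le zero_le_one, HH, ← Ioc_union_Ioi_eq_Ioi zero_le_one]
    refine setIntegral_union ?_ measurableSet_Ioi ?_ hf3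
    · exact Ioc_disjoint_Ioi le_rfl
    · exact (hcont.integrableOn_Icc).mono_set Ioc_subset_Icc_self
  have hsplit2 := intervalIntegral.integral_add_adjacent_intervals
    (hcont.intervalIntegrable 0 r (μ := volume)) (hcont.intervalIntegrable r 1)
  rw [hsplit, ← hsplit2]
  linarith

lemma mu_le {r : ℝ} (hr : r ∈ Ioo (0:ℝ) 1) : mu r ≤ 2 - Real.log r := by
  have h1 := ellK_ge (sq_lt_of_mem hr)
  have h0 := ellK_pos (sq_lt_of_mem hr)
  have h2 : ellK (Real.sqrt (1 - r ^ 2)) = HH 1 r :=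
    ellK_eq_s15 _ r hr.1 (Real.sq_sqrt (by linarith [sq_lt_of_mem hr]))
  have h3 := HH_le hr
  have h4 := ellK_pos (sq_lt_of_mem (sqrt_mem hr))
  refine le_trans ?_ h3
  unfold mu
  rw [div_le_iff₀ h0, h2, mul_comm]
  rw [h2] at h4
  gcongr

/-- The descending Landen transform. -/
noncomputable def lan (r : ℝ) : ℝ := (1 - Real.sqrt (1 - r ^ 2)) / (1 + Real.sqrt (1 - r ^ 2))

lemma lan_mem {r : ℝ} (hr : r ∈ Ioo (0:ℝ) 1) : lan r ∈ Ioo (0:ℝ) 1 := by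
  obtain ⟨h0, h1⟩ := sqrt_mem hr
  unfold lan
  refine ⟨div_pos (by linarith) (by linarith), ?_⟩
  rw [div_lt_one (by linarith)]
  linarith

lemma mu_lan {r : ℝ} (hr : r ∈ Ioo (0:ℝ) 1) : mu (lan r) = 2 * mu r := by
  have h := mu_landen (sqrt_mem hr)
  rw [Real.sq_sqrt (by linarith [sq_lt_of_mem hr]), sub_sub_cancel, Real.sqrt_sq hr.1.le] at h
  exact h

/-- r² (1 + r₁)² = 4 r₁. -/
lemma lan_eq {r : ℝ} (hr : r ∈ Ioo (0:ℝ) 1) : r ^ 2 * (1 + lan r) ^ 2 = 4 * lan r := by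
  obtain ⟨h0, h1⟩ := sqrt_mem hr
  have h2 : Real.sqrt (1 - r ^ 2) ^ 2 = 1 - r ^ 2 := Real.sq_sqrt (by linarith [sq_lt_of_mem hr])
  unfold lan
  have h3 : r ^ 2 = 1 - Real.sqrt (1 - r ^ 2) ^ 2 := by linarith
  generalize Real.sqrt (1 - r ^ 2) = p at *
  rw [h3]
  field_simp
  ring

lemma log_lan {r : ℝ} (hr : r ∈ Ioo (0:ℝ) 1) :
    Real.log (4 / lan r) < 2 * Real.log (4 / r) := by
  have h := lan_eq hr
  obtain ⟨h0, h1⟩ := lan_mem hr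
  have hr0 := hr.1
  have : 2 * Real.log (4 / r) = Real.log ((4 / r) ^ 2) := by
    rw [Real.log_pow]; norm_num
  rw [this]
  refine Real.log_lt_log (by positivity) ?_
  rw [div_pow, div_lt_div_iff₀ h0 (by positivity)]
  have : r ^ 2 < 4 * lan r := by
    rw [← h]
    have h5 : 0 < r ^ 2 := by positivity
    have h6 : 1 < (1 + lan r) ^ 2 := by nlinarith
    nlinarith
  linarith

lemma mu_le_aux (n : ℕ) : ∀ r ∈ Ioo (0:ℝ) 1, mu r ≤ Real.log (4 / r) + 2 * (1 / 2) ^ n := by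
  induction n with
  | zero =>
    intro r hr
    have h := mu_le hr
    rw [Real.log_div (by norm_num) hr.1.ne']
    have : 0 ≤ Real.log 4 := Real.log_nonneg (by norm_num)
    simp
    linarith
  | succ n ih =>
    intro r hr
    have h := ih _ (lan_mem hr)
    rw [mu_lan hr] at h
    have h2 := log_lan hr
    rw [pow_succ]
    linarith

lemma mu_le_log {r : ℝ} (hr : r ∈ Ioo (0:ℝ) 1) : mu r ≤ Real.log (4 / r) := by
  have h : Tendsto (fun n : ℕ => Real.log (4 / r) + 2 * (1 / 2 : ℝ) ^ n) atTop
      (nhds (Real.log (4 / r) + 2 * 0)) :=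
    ((tendsto_pow_atTop_nhds_zero_of_lt_one (by norm_num) (by norm_num)).const_mul 2).const_add _
  rw [mul_zero, add_zero] at h
  exact ge_of_tendsto' h fun n => mu_le_aux n r hr

lemma mu_lt_log {r : ℝ} (hr : r ∈ Ioo (0:ℝ) 1) : mu r < Real.log (4 / r) := by
  have h1 := mu_le_log (lan_mem hr)
  rw [mu_lan hr] at h1
  have h2 := log_lan hr
  linarith

lemma mu_lan_iter (n : ℕ) : ∀ r ∈ Ioo (0:ℝ) 1, ∃ s ∈ Ioo (0:ℝ) 1, mu s = 2 ^ n * mu r := by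
  induction n with
  | zero => intro r hr; exact ⟨r, hr, by simp⟩
  | succ n ih =>
    intro r hr
    obtain ⟨s, hs, h⟩ := ih _ (lan_mem hr)
    refine ⟨s, hs, ?_⟩
    rw [h, mu_lan hr]; ring

lemma mu_exists {r K : ℝ} (hr : r ∈ Ioo (0:ℝ) 1) (hK : 1 < K) :
    ∃ u ∈ Ioo (0:ℝ) 1, mu u = K * mu r := by
  have hp := mu_pos hr
  obtain ⟨n, hn⟩ := pow_unbounded_of_one_lt K (one_lt_two)
  obtain ⟨s, hs, h⟩ := mu_lan_iter n r hr
  have := (isPreconnected_Ioo (a := (0:ℝ)) (b := 1)).intermediate_value hr hs mu_contOn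
  obtain ⟨u, hu, hu2⟩ := this (show K * mu r ∈ Icc (mu r) (mu s) by
    rw [h]
    constructor <;> nlinarith)
  exact ⟨u, hu, hu2⟩

lemma main_ineq {u q : ℝ} (hu : u ∈ Ioo (0:ℝ) 1) (hq : q = Real.exp (-(2 * mu u)))
    (hq2 : q ≤ 1 / 2) :
    1 / (16 * q) - 1 / 2 + (1 / 4 + 1 / (4 * q ^ 2 + 1)) * q < 1 / u ^ 2 - 1 := by
  have hq0 : 0 < q := by rw [hq]; positivity
  have m1 := lan_mem hu
  have m2 := lan_mem m1
  have e1 := lan_eq hu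
  have e2 := lan_eq m1
  have hmu : mu (lan (lan u)) = 4 * mu u := by rw [mu_lan m1, mu_lan hu]; ring
  have hlt := mu_lt_log m2
  rw [hmu] at hlt
  have hlt2 : lan (lan u) < 4 * q ^ 2 := by
    have h := Real.exp_lt_exp.2 (neg_lt_neg hlt)
    rw [← Real.log_inv, Real.exp_log (inv_pos.2 (div_pos (by norm_num) m2.1)), inv_div] at h
    have : q ^ 2 = Real.exp (-(4 * mu u)) := by
      rw [hq, ← Real.exp_nat_mul]; congr 1; push_cast; ring
    rw [this]; linarith
  generalize lan (lan u) = v at *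
  generalize lan u = x at *
  obtain ⟨s, hs0, hs⟩ : ∃ s, 0 < s ∧ s ^ 2 = v := ⟨Real.sqrt v, Real.sqrt_pos.2 m2.1, Real.sq_sqrt m2.1.le⟩
  subst hs
  have hx0 := m1.1
  have hu0 := hu.1
  have hs1 : s < 1 := by nlinarith [m2.2]
  have hsq : s < 2 * q := by nlinarith
  have hx : x = 2 * s / (1 + s ^ 2) := by
    rw [eq_div_iff (by positivity)]
    have : (x * (1 + s ^ 2)) ^ 2 = (2 * s) ^ 2 := by rw [mul_pow, e2]; ring
    exact (pow_left_inj₀ (by positivity) (by positivity) two_ne_zero).1 this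
  have heta : 1 / u ^ 2 - 1 = (1 - s) ^ 4 / (8 * s * (1 + s ^ 2)) := by
    have : u ^ 2 = 4 * x / (1 + x) ^ 2 := by rw [eq_div_iff (by positivity), e1]
    rw [this, hx]
    field_simp
    ring
  have hl : 1 / (16 * q) - 1 / 2 + (1 / 4 + 1 / (4 * q ^ 2 + 1)) * q
      = (1 - 2 * q) ^ 4 / (8 * (2 * q) * (1 + (2 * q) ^ 2)) := by
    have : 4 * q ^ 2 + 1 ≠ 0 := by positivity
    have : 1 + (2 * q) ^ 2 ≠ 0 := by positivity
    field_simp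
    ring
  rw [heta, hl]
  have h2q : 0 ≤ 1 - 2 * q := by linarith
  have n1 : (1 - 2 * q) ^ 4 < (1 - s) ^ 4 := pow_lt_pow_left₀ (by linarith) h2q (by norm_num)
  have n2 : 8 * s * (1 + s ^ 2) ≤ 8 * (2 * q) * (1 + (2 * q) ^ 2) := by gcongr
  exact div_lt_div₀ n1 n2 (by positivity) (by positivity)

theorem stmt_15 (eta : ℝ → ℝ → ℝ)
    (heta : ∀ K t : ℝ, 0 < K → 0 < t → ∀ u ∈ Set.Ioo (0:ℝ) 1,
      mu u = K * mu (1 / Real.sqrt (1 + t)) → eta K t = 1 / u ^ 2 - 1) (K w : ℝ) (hK : 1 < K)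
    (hw : w ∈ Set.Ioo (0:ℝ) 1) (hmuw : mu w = 1 / (2 * K) * Real.log 2) :
    ∀ t : ℝ, 1 / w ^ 2 - 1 ≤ t →
      1 / 16 * Real.exp (2 * K * mu (1 / Real.sqrt (1 + t))) - 1 / 2 +
        (1 / 4 + 1 / (4 * Real.exp (-(4 * K * mu (1 / Real.sqrt (1 + t)))) + 1)) *
          Real.exp (-(2 * K * mu (1 / Real.sqrt (1 + t)))) < eta K t ∧
      9 / 20 < 1 / 4 + 1 / (4 * Real.exp (-(4 * K * mu (1 / Real.sqrt (1 + t)))) + 1) := by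
  intro t ht
  have hK0 : 0 < K := by linarith
  have hw2 : 0 < w ^ 2 := pow_pos hw.1 2
  have hw1 := sq_lt_of_mem hw
  have ht0 : 0 < t := by
    have : 1 < 1 / w ^ 2 := by rw [lt_div_iff₀ hw2]; linarith
    linarith
  have hrm : 1 / Real.sqrt (1 + t) ∈ Ioo (0:ℝ) 1 := by
    have : 1 < Real.sqrt (1 + t) := by rw [Real.lt_sqrt zero_le_one]; linarith
    exact ⟨by positivity, by rw [div_lt_one (by linarith)]; exact this⟩
  have hrw : 1 / Real.sqrt (1 + t) ≤ w := by
    rw [div_le_comm₀ (by positivity) hw.1]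
    refine Real.le_sqrt_of_sq_le ?_
    rw [div_pow, one_pow]
    linarith
  have hmu := mu_anti hrm hw hrw
  obtain ⟨u, hu, hu2⟩ := mu_exists hrm hK
  rw [heta K t hK0 ht0 u hu hu2]
  generalize mu (1 / Real.sqrt (1 + t)) = m at *
  have hlog : Real.log 2 ≤ 2 * K * m := by
    rw [hmuw] at hmu
    have := mul_le_mul_of_nonneg_left hmu (show 0 ≤ 2 * K by linarith)
    rwa [← mul_assoc, mul_one_div_cancel (by linarith), one_mul] at this
  obtain ⟨q, hq⟩ : ∃ q, q = Real.exp (-(2 * K * m)) := ⟨_, rfl⟩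
  have hq0 : 0 < q := by rw [hq]; positivity
  have hqle : q ≤ 1 / 2 := by
    have : Real.exp (-(2 * K * m)) ≤ Real.exp (-Real.log 2) := Real.exp_le_exp.2 (by linarith)
    rw [Real.exp_neg (Real.log 2), Real.exp_log two_pos, ← hq] at this
    linarith
  have h1 : Real.exp (2 * K * m) = 1 / q := by
    rw [hq, Real.exp_neg, one_div, inv_inv]
  have h2 : Real.exp (-(4 * K * m)) = q ^ 2 := by
    rw [hq, ← Real.exp_nat_mul]; congr 1; push_cast; ring
  rw [← hq, h1, h2]
  constructor
  · have := main_ineq hu (q := q) (by rw [hq, hu2]; congr 1; ring) hqle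
    rw [one_div_mul_one_div]
    exact this
  · have : 1 / 2 ≤ 1 / (4 * q ^ 2 + 1) := by
      refine one_div_le_one_div_of_le (by positivity) ?_
      nlinarith
    linarith
end
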